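/- (Theorem 2.11) Let p ∈ C³((0,∞)) satisfy: p'(τ) < 0 and p''(τ) > 0 for all τ > 0; lim_{τ→0⁺} p(τ) = +∞, lim_{τ→∞} p(τ) = 0, ∫_1^∞ √(−p'(τ)) dτ < ∞; ∫_0^1 √(−p'(τ)) dτ = ∞; and suppose there exists A > 0 such that (5+A) p''(τ)² − 4 p'(τ) p'''(τ) ≥ 0 for all τ > 0. Let the initial data (τ₀,u₀) satisfy Assumption A. Then the Cauchy problem for the p-system with pressure p admits a global-in-time C¹ solution if and only if s_x(x,0) ≥ 0 and r_x(x,0) ≥ 0 for all x ∈ ℝ. -/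

import Mathlib

open Real Set MeasureTheory Filter

/-- A `Cᵏ` solution `(τ, u)` of the p-system with general pressure `p` on `ℝ × I`. -/
def GenPSysSol (p : ℝ → ℝ) (I : Set ℝ) (k : ℕ) (τ u : ℝ → ℝ → ℝ) : Prop :=
  (∀ x t, t ∈ I → 0 < τ x t) ∧
  ContDiffOn ℝ k (fun q : ℝ × ℝ => τ q.1 q.2) (Set.univ ×ˢ I) ∧
  ContDiffOn ℝ k (fun q : ℝ × ℝ => u q.1 q.2) (Set.univ ×ˢ I) ∧
  (∀ x : ℝ, ∀ t ∈ I, deriv (fun t' => τ x t') t - deriv (fun x' => u x' t) x = 0) ∧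
  (∀ x : ℝ, ∀ t ∈ I, deriv (fun t' => u x t') t + deriv (fun x' => p (τ x' t)) x = 0)

/-- Assumption A: `τ₀, u₀` are `C¹` with `‖τ₀‖_{C¹} + ‖u₀‖_{C¹} ≤ M₁` and `τ₀ ≥ M₂ > 0`. -/
def AssumptionA (M₁ M₂ : ℝ) (τ₀ u₀ : ℝ → ℝ) : Prop :=
  ContDiff ℝ 1 τ₀ ∧ ContDiff ℝ 1 u₀ ∧ 0 < M₁ ∧ 0 < M₂ ∧
  (∀ x, |τ₀ x| + |deriv τ₀ x| + |u₀ x| + |deriv u₀ x| ≤ M₁) ∧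
  (∀ x, M₂ ≤ τ₀ x)


structure PData (p c c1 φ : ℝ → ℝ) : Prop where
  cpos : ∀ v, 0 < v → 0 < c v
  dc : ∀ v, 0 < v → HasDerivAt c (c1 v) v
  c1neg : ∀ v, 0 < v → c1 v < 0
  c1cont : ContinuousOn c1 (Ioi 0)
  dphi : ∀ v, 0 < v → HasDerivAt φ (-c v) v
  phitop : ∀ Z : ℝ, ∃ v, 0 < v ∧ Z ≤ φ v
  dp : ∀ v, 0 < v → HasDerivAt p (-(c v)^2) v
  growth : ∀ m, 0 < m → ∃ ε, 0 < ε ∧ ∀ v, m ≤ v → ε / (1 + v) ≤ -c1 v / (2 * (c v * √(c v)))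

lemma growth_aux (q p2 p3 : ℝ → ℝ) (A : ℝ) (hA : 0 < A)
    (hq : ∀ v, 0 < v → 0 < q v) (hp2 : ∀ v, 0 < v → 0 < p2 v)
    (dq : ∀ v, 0 < v → HasDerivAt q (-p2 v) v) (dp2 : ∀ v, 0 < v → HasDerivAt p2 (p3 v) v)
    (hc : ∀ v, 0 < v → 0 ≤ (5 + A) * p2 v ^ 2 + 4 * q v * p3 v) (m : ℝ) (hm : 0 < m) :
    ∃ ε, 0 < ε ∧ ∀ v, m ≤ v → ε / (1 + v) ≤ q v ^ (-(5/4) : ℝ) * p2 v / 4 := by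
  set h : ℝ → ℝ := fun v => q v ^ (-((5 + A)/4) : ℝ) * p2 v with hh
  have dh : ∀ v, 0 < v → HasDerivAt h
      ((-p2 v) * (-((5 + A)/4)) * q v ^ (-((5 + A)/4) - 1 : ℝ) * p2 v
        + q v ^ (-((5 + A)/4) : ℝ) * p3 v) v := fun v hv =>
    ((dq v hv).rpow_const (Or.inl (hq v hv).ne')).mul (dp2 v hv)
  have hmono : MonotoneOn h (Ici m) := by
    apply monotoneOn_of_deriv_nonneg (convex_Ici m)
    · intro v hv; exact (dh v (hm.trans_le hv)).continuousAt.continuousWithinAt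
    · intro v hv; rw [interior_Ici] at hv
      exact (dh v (hm.trans hv)).differentiableAt.differentiableWithinAt
    · intro v hv; rw [interior_Ici] at hv
      have hv0 := hm.trans hv
      rw [(dh v hv0).deriv]
      have e : q v ^ (-((5 + A)/4) : ℝ) = q v ^ (-((5 + A)/4) - 1 : ℝ) * q v := by
        rw [← rpow_add_one (hq v hv0).ne']; ring_nf
      rw [e]
      have := mul_nonneg (rpow_nonneg (hq v hv0).le (-((5 + A)/4) - 1 : ℝ)) (hc v hv0)
      nlinarith
  -- w = q^{-(1+A)/4}
  set w : ℝ → ℝ := fun v => q v ^ (-((1 + A)/4) : ℝ) with hw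
  have dw : ∀ v, 0 < v → HasDerivAt w ((1 + A)/4 * h v) v := by
    intro v hv
    have := (dq v hv).rpow_const (p := (-((1 + A)/4) : ℝ)) (Or.inl (hq v hv).ne')
    convert this using 1
    simp only [hh]
    rw [show (-((1 + A)/4) - 1 : ℝ) = -((5 + A)/4) by ring]; ring
  have hconv : ∀ v, m ≤ v → w v - w m ≤ (1 + A)/4 * h v * (v - m) := by
    intro v hv
    have := Convex.image_sub_le_mul_sub_of_deriv_le (convex_Icc m v) (f := w) (C := (1 + A)/4 * h v)
      (fun x hx => (dw x (hm.trans_le hx.1)).continuousAt.continuousWithinAt)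
      (fun x hx => by
        rw [interior_Icc] at hx
        exact (dw x (hm.trans hx.1)).differentiableAt.differentiableWithinAt)
      (fun x hx => by
        rw [interior_Icc] at hx
        rw [(dw x (hm.trans hx.1)).deriv]
        exact mul_le_mul_of_nonneg_left (hmono hx.1.le hv hx.2.le) (by positivity))
      m ⟨le_rfl, hv⟩ v ⟨hv, le_rfl⟩ hv
    exact this
  -- b = q^{-1/4}
  set b : ℝ → ℝ := fun v => q v ^ (-(1/4) : ℝ) with hb
  have bpos : ∀ v, 0 < v → 0 < b v := fun v hv => rpow_pos_of_pos (hq v hv) _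
  have wb : ∀ v, 0 < v → w v = b v * b v ^ A := by
    intro v hv
    simp only [hw, hb]
    rw [← rpow_mul (hq v hv).le, ← rpow_add (hq v hv)]; ring_nf
  have ha : ∀ v, 0 < v → q v ^ (-(5/4) : ℝ) * p2 v * b v ^ A = h v := by
    intro v hv
    simp only [hh, hb]
    rw [← rpow_mul (hq v hv).le, mul_right_comm, ← rpow_add (hq v hv)]; ring_nf
  have hmpos : 0 < h m := mul_pos (rpow_pos_of_pos (hq m hm) _) (hp2 m hm)
  have bm := bpos m hm
  refine ⟨min (h m / (2 * b m) ^ A / 4) (b m / (1 + A)), by positivity, ?_⟩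
  intro v hv
  have hv0 := hm.trans_le hv
  have bv := bpos v hv0
  have bvA : 0 < b v ^ A := rpow_pos_of_pos bv _
  have hhv : h m ≤ h v := hmono (mem_Ici.2 le_rfl) hv hv
  set a := q v ^ (-(5/4) : ℝ) * p2 v with hadef
  have hav := ha v hv0
  have ap : 0 < a := mul_pos (rpow_pos_of_pos (hq v hv0) _) (hp2 v hv0)
  rw [div_le_iff₀ (by linarith)]
  by_cases hcase : b v ≤ 2 * b m
  · refine (min_le_left _ _).trans ?_
    have h1 : b v ^ A ≤ (2 * b m) ^ A := rpow_le_rpow bv.le hcase hA.le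
    have h2 : h m / (2 * b m) ^ A ≤ a := by
      rw [div_le_iff₀ (by positivity)]
      calc h m ≤ h v := hhv
        _ = a * b v ^ A := hav.symm
        _ ≤ _ := by gcongr
    nlinarith
  · push Not at hcase
    refine (min_le_right _ _).trans ?_
    have h3 := hconv v hv
    rw [wb v hv0, wb m hm, ← hav] at h3
    have h4 : b m ^ A ≤ b v ^ A := rpow_le_rpow bm.le (by linarith) hA.le
    have h5 : b m * b v ^ A ≤ (1 + A) / 4 * (a * b v ^ A) * (v - m) := by
      nlinarith [mul_le_mul_of_nonneg_left h4 bm.le, mul_lt_mul_of_pos_right hcase bvA]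
    have h6 : b m ≤ (1 + A) / 4 * a * (v - m) := by
      by_contra hcon
      push Not at hcon
      nlinarith [mul_lt_mul_of_pos_right hcon bvA]
    rw [div_le_iff₀ (by linarith)]
    have : 0 < (1 + A) / 4 * a := by positivity
    nlinarith

lemma mkPData (p : ℝ → ℝ)
    (hp : ContDiffOn ℝ 3 p (Set.Ioi 0))
    (hp' : ∀ v ∈ Set.Ioi (0 : ℝ), deriv p v < 0)
    (hp'' : ∀ v ∈ Set.Ioi (0 : ℝ), 0 < deriv (deriv p) v)
    (hint0 : ¬ MeasureTheory.IntegrableOn (fun v => Real.sqrt (-deriv p v)) (Set.Ioo 0 1))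
    (hcond : ∃ A > (0 : ℝ), ∀ v ∈ Set.Ioi (0 : ℝ),
      0 ≤ (5 + A) * deriv (deriv p) v ^ 2 - 4 * deriv p v * deriv (deriv (deriv p)) v) :
    PData p (fun v => √(-deriv p v)) (fun v => -deriv (deriv p) v / (2 * √(-deriv p v)))
      (fun v => ∫ ξ in v..1, √(-deriv p ξ)) := by
  have hp2 : ContDiffOn ℝ 2 (deriv p) (Ioi 0) :=
    ((contDiffOn_succ_iff_deriv_of_isOpen (n := 2) isOpen_Ioi).1 (by norm_num; exact hp)).2.2
  have hp3 : ContDiffOn ℝ 1 (deriv (deriv p)) (Ioi 0) :=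
    ((contDiffOn_succ_iff_deriv_of_isOpen (n := 1) isOpen_Ioi).1 (by norm_num; exact hp2)).2.2
  have d1 : ∀ v, 0 < v → HasDerivAt p (deriv p v) v := fun v hv =>
    ((hp.differentiableOn (by norm_num)).differentiableAt (Ioi_mem_nhds hv)).hasDerivAt
  have d2 : ∀ v, 0 < v → HasDerivAt (deriv p) (deriv (deriv p) v) v := fun v hv =>
    ((hp2.differentiableOn (by norm_num)).differentiableAt (Ioi_mem_nhds hv)).hasDerivAt
  have d3 : ∀ v, 0 < v → HasDerivAt (deriv (deriv p)) (deriv (deriv (deriv p)) v) v := fun v hv =>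
    ((hp3.differentiableOn (by norm_num)).differentiableAt (Ioi_mem_nhds hv)).hasDerivAt
  have qpos : ∀ v, 0 < v → 0 < -deriv p v := fun v hv => by linarith [hp' v hv]
  have cpos : ∀ v, 0 < v → 0 < √(-deriv p v) := fun v hv => Real.sqrt_pos.2 (qpos v hv)
  have ccont : ContinuousOn (fun v => √(-deriv p v)) (Ioi 0) := hp2.continuousOn.neg.sqrt
  have cint : ∀ v w, 0 < v → 0 < w → IntervalIntegrable (fun v => √(-deriv p v)) volume v w := by
    intro v w hv hw
    apply ContinuousOn.intervalIntegrable
    apply ccont.mono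
    intro x hx
    exact lt_of_lt_of_le (lt_min hv hw) hx.1
  refine ⟨cpos, ?_, ?_, ?_, ?_, ?_, ?_, ?_⟩
  · intro v hv
    exact (d2 v hv).neg.sqrt (qpos v hv).ne'
  · intro v hv
    exact div_neg_of_neg_of_pos (by linarith [hp'' v hv]) (by linarith [cpos v hv])
  · apply ContinuousOn.div hp3.continuousOn.neg (ccont.const_smul (2:ℝ))
    intro v hv
    have := cpos v hv
    exact (mul_pos two_pos this).ne'
  · intro v hv
    exact intervalIntegral.integral_hasDerivAt_left (cint v 1 hv one_pos)
      (ccont.stronglyMeasurableAtFilter isOpen_Ioi v hv) (ccont.continuousAt (Ioi_mem_nhds hv))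
  · intro Z
    by_contra hcon
    push Not at hcon
    apply hint0
    have hseq : Tendsto (fun n : ℕ => 1 / ((n:ℝ) + 1)) atTop (nhds 0) :=
      tendsto_one_div_add_atTop_nhds_zero_nat
    have := integrableOn_Ioc_of_intervalIntegral_norm_bounded
      (f := fun v => √(-deriv p v)) (I := Z) (l := atTop)
      (a := fun n : ℕ => 1 / ((n:ℝ) + 1)) (b := fun _ => (1:ℝ)) (a₀ := 0) (b₀ := 1)
      (fun n => by
        have h1 : (0:ℝ) < 1 / ((n:ℝ) + 1) := by positivity
        have h2 : 1 / ((n:ℝ) + 1) ≤ 1 := by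
          rw [div_le_one (by positivity)]; linarith [Nat.cast_nonneg (α := ℝ) n]
        exact (intervalIntegrable_iff_integrableOn_Ioc_of_le h2).1 (cint _ _ h1 one_pos))
      hseq tendsto_const_nhds
      (Eventually.of_forall fun n => by
        have h1 : (0:ℝ) < 1 / ((n:ℝ) + 1) := by positivity
        have h2 : 1 / ((n:ℝ) + 1) ≤ 1 := by
          rw [div_le_one (by positivity)]; linarith [Nat.cast_nonneg (α := ℝ) n]
        have := hcon _ h1
        rw [intervalIntegral.integral_of_le h2] at this
        simp only [Real.norm_of_nonneg (Real.sqrt_nonneg _)]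
        exact this.le)
    exact this.mono_set Ioo_subset_Ioc_self
  · intro v hv
    rw [Real.sq_sqrt (qpos v hv).le, neg_neg]; exact d1 v hv
  · intro m hm
    obtain ⟨A, hA, hc⟩ := hcond
    obtain ⟨ε, h0, h1⟩ := growth_aux (fun v => -deriv p v) (deriv (deriv p))
      (deriv (deriv (deriv p))) A hA qpos hp'' (fun v hv => (d2 v hv).neg) d3
      (fun v hv => by have := hc v hv; linarith) m hm
    refine ⟨ε, h0, fun v hv => (h1 v hv).trans (le_of_eq ?_)⟩
    have hq := qpos v (hm.trans_le hv)
    set q := -deriv p v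
    rw [Real.rpow_neg hq.le, show (5/4:ℝ) = 1 + 1/2 * (1/2) by norm_num, rpow_add hq, rpow_one,
      rpow_mul hq.le, ← Real.sqrt_eq_rpow, ← Real.sqrt_eq_rpow]
    have e1 : √q * √q = q := Real.mul_self_sqrt hq.le
    have e2 : 0 < √q := Real.sqrt_pos.2 hq
    have e3 : 0 < √(√q) := Real.sqrt_pos.2 e2
    rw [← e1]; simp only [Real.sqrt_mul_self e2.le]
    field_simp
    norm_num


namespace PData
variable {p c c1 φ : ℝ → ℝ}

lemma cAnti (h : PData p c c1 φ) {v w : ℝ} (hv : 0 < v) (hvw : v ≤ w) : c w ≤ c v := by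
  have : AntitoneOn c (Ioi 0) := by
    apply antitoneOn_of_deriv_nonpos (convex_Ioi 0)
    · intro x hx; exact (h.dc x hx).continuousAt.continuousWithinAt
    · intro x hx; rw [interior_Ioi] at hx
      exact (h.dc x hx).differentiableAt.differentiableWithinAt
    · intro x hx; rw [interior_Ioi] at hx
      rw [(h.dc x hx).deriv]; exact (h.c1neg x hx).le
  exact this hv (hv.trans_le hvw) hvw

lemma phiAnti (h : PData p c c1 φ) : StrictAntiOn φ (Ioi 0) := by
  apply strictAntiOn_of_deriv_neg (convex_Ioi 0)
  · intro x hx; exact (h.dphi x hx).continuousAt.continuousWithinAt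
  · intro x hx; rw [interior_Ioi] at hx
    rw [(h.dphi x hx).deriv]; linarith [h.cpos x hx]
end PData

structure Sol (c : ℝ → ℝ) (τ u Tx Ux : ℝ → ℝ → ℝ) : Prop where
  pos : ∀ x t, 0 ≤ t → 0 < τ x t
  ct : ContinuousOn (fun q : ℝ × ℝ => τ q.1 q.2) (univ ×ˢ Ici 0)
  cu : ContinuousOn (fun q : ℝ × ℝ => u q.1 q.2) (univ ×ˢ Ici 0)
  dt : ∀ x t, 0 < t → HasFDerivAt (fun q : ℝ × ℝ => τ q.1 q.2)
    (Tx x t • ContinuousLinearMap.fst ℝ ℝ ℝ + Ux x t • ContinuousLinearMap.snd ℝ ℝ ℝ) (x, t)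
  du : ∀ x t, 0 < t → HasFDerivAt (fun q : ℝ × ℝ => u q.1 q.2)
    (Ux x t • ContinuousLinearMap.fst ℝ ℝ ℝ
      + ((c (τ x t))^2 * Tx x t) • ContinuousLinearMap.snd ℝ ℝ ℝ) (x, t)
  cTx : ContinuousOn (fun q : ℝ × ℝ => Tx q.1 q.2) (univ ×ˢ Ioi 0)
  cUx : ContinuousOn (fun q : ℝ × ℝ => Ux q.1 q.2) (univ ×ˢ Ioi 0)

lemma firstfail {Y : Type*} [TopologicalSpace Y] (Ω : Set Y) (hΩ : IsCompact Ω) (θ : Y → ℝ)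
    (hθ : Continuous θ) (G1 G2 : Y → ℝ) (h1 : ContinuousOn G1 Ω) (h2 : ContinuousOn G2 Ω)
    (H : ∀ q ∈ Ω, (∀ q' ∈ Ω, θ q' < θ q → G1 q' < 0 ∧ G2 q' < 0) → (0 ≤ G1 q ∨ 0 ≤ G2 q) → False) :
    ∀ q ∈ Ω, G1 q < 0 ∧ G2 q < 0 := by
  by_contra hcon
  push Not at hcon
  obtain ⟨q0, hq0, hq0'⟩ := hcon
  have hne : (Ω ∩ (fun q => max (G1 q) (G2 q)) ⁻¹' Ici 0).Nonempty := by
    refine ⟨q0, hq0, ?_⟩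
    simp only [mem_preimage, mem_Ici, le_max_iff]
    by_contra hh; push Not at hh
    exact absurd (hq0' hh.1) (not_le.2 hh.2)
  have hc : IsCompact (Ω ∩ (fun q => max (G1 q) (G2 q)) ⁻¹' Ici 0) := by
    obtain ⟨v, hv, hv'⟩ := (continuousOn_iff_isClosed.1 (continuous_max.comp_continuousOn (h1.prodMk h2))) (Ici 0) isClosed_Ici
    have e : Ω ∩ (fun q => max (G1 q) (G2 q)) ⁻¹' Ici 0 = Ω ∩ v := by
      rw [inter_comm, inter_comm Ω v, ← hv']; rfl
    rw [e]
    exact hΩ.inter_right hv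
  obtain ⟨q, hq, hmin⟩ := hc.exists_isMinOn hne hθ.continuousOn
  refine H q hq.1 ?_ (by simpa using hq.2)
  intro q' hq' hlt
  by_contra hh
  have : q' ∈ (Ω ∩ (fun q => max (G1 q) (G2 q)) ⁻¹' Ici 0) := by
    refine ⟨hq', ?_⟩
    simp only [mem_preimage, mem_Ici, le_max_iff]
    by_contra h3; push Not at h3; exact hh h3
  have := hmin this
  simp only [mem_ofPred_eq] at this
  linarith

lemma deriv_contra {f : ℝ → ℝ} {d η : ℝ} (hf : HasDerivAt f d 0) (hd : 0 < d) (h0 : 0 ≤ f 0)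
    (hη : 0 < η) (hneg : ∀ h, 0 < h → h < η → f h < 0) : False := by
  have h1 := hf.hasDerivWithinAt (s := Ioi 0)
  rw [hasDerivWithinAt_iff_tendsto_slope' (by simp)] at h1
  have h2 := h1.eventually (lt_mem_nhds hd)
  have h3 : ∀ᶠ h in nhdsWithin (0:ℝ) (Ioi 0), h ∈ Ioo 0 η := Ioo_mem_nhdsGT hη
  obtain ⟨h, ha, hb⟩ := (h2.and h3).exists
  have := hneg h hb.1 hb.2
  rw [slope_def_field] at ha
  have : (f h - f 0) / (h - 0) < 0 := div_neg_of_neg_of_pos (by linarith) (by linarith [hb.1])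
  linarith

lemma lim_le {f : ℝ → ℝ} {η : ℝ} (hf : ContinuousAt f 0) (hη : 0 < η)
    (hneg : ∀ h, 0 < h → h < η → f h < 0) : f 0 ≤ 0 := by
  have h1 : Tendsto f (nhdsWithin 0 (Ioi 0)) (nhds (f 0)) := hf.tendsto.mono_left nhdsWithin_le_nhds
  refine le_of_tendsto h1 ?_
  filter_upwards [Ioo_mem_nhdsGT hη] with h hh
  exact (hneg h hh.1 hh.2).le

section
variable {p c c1 φ : ℝ → ℝ} {τ u Tx Ux : ℝ → ℝ → ℝ}

lemma Sol.ds (h : PData p c c1 φ) (hs : Sol c τ u Tx Ux) (x t : ℝ) (ht : 0 < t) :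
    HasFDerivAt (fun q : ℝ × ℝ => u q.1 q.2 + φ (τ q.1 q.2))
    ((Ux x t - c (τ x t) * Tx x t) • ContinuousLinearMap.fst ℝ ℝ ℝ
      + (-(c (τ x t)) * (Ux x t - c (τ x t) * Tx x t)) • ContinuousLinearMap.snd ℝ ℝ ℝ) (x, t) := by
  have := (hs.du x t ht).add
    ((h.dphi _ (hs.pos x t ht.le)).comp_hasFDerivAt (x, t) (hs.dt x t ht))
  exact this.congr_fderiv (by ext <;> simp <;> ring)

lemma Sol.dr (h : PData p c c1 φ) (hs : Sol c τ u Tx Ux) (x t : ℝ) (ht : 0 < t) :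
    HasFDerivAt (fun q : ℝ × ℝ => u q.1 q.2 - φ (τ q.1 q.2))
    ((Ux x t + c (τ x t) * Tx x t) • ContinuousLinearMap.fst ℝ ℝ ℝ
      + ((c (τ x t)) * (Ux x t + c (τ x t) * Tx x t)) • ContinuousLinearMap.snd ℝ ℝ ℝ) (x, t) := by
  have := (hs.du x t ht).sub
    ((h.dphi _ (hs.pos x t ht.le)).comp_hasFDerivAt (x, t) (hs.dt x t ht))
  exact this.congr_fderiv (by ext <;> simp <;> ring)

lemma path_deriv {F : ℝ × ℝ → ℝ} {L : ℝ × ℝ →L[ℝ] ℝ} {x t : ℝ} (hF : HasFDerivAt F L (x, t)) (k : ℝ) :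
    HasDerivAt (fun h : ℝ => F (x + k * h, t - h)) (L (k, -1)) 0 := by
  have hp : HasDerivAt (fun h : ℝ => (x + k * h, t - h)) (k, -1) 0 := by
    apply HasDerivAt.prodMk
    · simpa using ((hasDerivAt_id (0:ℝ)).const_mul k).const_add x
    · simpa using (hasDerivAt_id (0:ℝ)).const_sub t
  have hF' : HasFDerivAt F L ((fun h : ℝ => (x + k * h, t - h)) 0) := by simpa using hF
  exact hF'.comp_hasDerivAt 0 hp

lemma Sol.path_s (h : PData p c c1 φ) (hs : Sol c τ u Tx Ux) (x t : ℝ) (ht : 0 < t) :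
    HasDerivAt (fun h : ℝ => u (x + (-c (τ x t)) * h) (t - h) + φ (τ (x + (-c (τ x t)) * h) (t - h)))
      0 0 := by
  have := path_deriv (hs.ds h x t ht) (-c (τ x t))
  convert this using 1
  simp; ring

lemma Sol.path_r (h : PData p c c1 φ) (hs : Sol c τ u Tx Ux) (x t : ℝ) (ht : 0 < t) :
    HasDerivAt (fun h : ℝ => u (x + (c (τ x t)) * h) (t - h) - φ (τ (x + (c (τ x t)) * h) (t - h)))
      0 0 := by
  have := path_deriv (hs.dr h x t ht) (c (τ x t))
  convert this using 1
  simp; ring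

lemma Sol.cphi (h : PData p c c1 φ) (hs : Sol c τ u Tx Ux) :
    ContinuousOn (fun q : ℝ × ℝ => φ (τ q.1 q.2)) (univ ×ˢ Ici 0) := by
  have hφ : ContinuousOn φ (Ioi 0) := fun v hv => (h.dphi v hv).continuousAt.continuousWithinAt
  exact hφ.comp hs.ct (fun q hq => hs.pos _ _ hq.2)

theorem Sol.lower (h : PData p c c1 φ) (hs : Sol c τ u Tx Ux) {S R τm : ℝ}
    (hS : ∀ x, u x 0 + φ (τ x 0) ≤ S) (hR : ∀ x, R ≤ u x 0 - φ (τ x 0)) (hm : 0 < τm)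
    (hφ : (S - R) / 2 + 1 ≤ φ τm) : ∀ x t, 0 ≤ t → τm ≤ τ x t := by
  intro x1 t1 ht1
  set K := c τm
  have hK : 0 < K := h.cpos _ hm
  set ε : ℝ := 1 / (2 * (1 + t1)) with hε
  have he : 0 < ε := by positivity
  have he1 : 2 * (ε * (1 + t1)) = 1 := by rw [hε]; field_simp
  have key : ∀ x t, 0 ≤ t → t ≤ t1 → u x t + φ (τ x t) - S - ε * (1 + t) ≤ 0 →
      R - (u x t - φ (τ x t)) - ε * (1 + t) ≤ 0 → τm ≤ τ x t := by
    intro x t ht htt a1 a2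
    have : ε * (1 + t) ≤ ε * (1 + t1) := by gcongr
    by_contra hlt
    push Not at hlt
    have := h.phiAnti (hs.pos x t ht) hm hlt
    linarith
  set Ω : Set (ℝ × ℝ) := {q | 0 ≤ q.2 ∧ q.2 ≤ t1 ∧ x1 - K * (t1 - q.2) ≤ q.1 ∧
    q.1 ≤ x1 + K * (t1 - q.2)} with hΩ
  have hcomp : IsCompact Ω := by
    apply IsCompact.of_isClosed_subset (isCompact_Icc.prod isCompact_Icc :
      IsCompact (Icc (x1 - K * t1) (x1 + K * t1) ×ˢ Icc 0 t1))
    · refine IsClosed.and (isClosed_le ?_ ?_) (IsClosed.and (isClosed_le ?_ ?_) (IsClosed.and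
        (isClosed_le ?_ ?_) (isClosed_le ?_ ?_))) <;> fun_prop
    · rintro ⟨x, t⟩ ⟨a1, a2, a3, a4⟩
      simp only at a1 a2 a3 a4
      refine ⟨⟨?_, ?_⟩, a1, a2⟩ <;> simp only <;> nlinarith
  have hsub : Ω ⊆ univ ×ˢ Ici 0 := fun q hq => ⟨trivial, hq.1⟩
  have res := firstfail Ω hcomp (fun q => q.2) continuous_snd
    (fun q => u q.1 q.2 + φ (τ q.1 q.2) - S - ε * (1 + q.2))
    (fun q => R - (u q.1 q.2 - φ (τ q.1 q.2)) - ε * (1 + q.2))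
    ((((hs.cu.add (hs.cphi h)).mono hsub).sub continuousOn_const).sub (by fun_prop))
    ((continuousOn_const.sub ((hs.cu.sub (hs.cphi h)).mono hsub)).sub (by fun_prop)) ?_
  · have := res (x1, t1) (by simp [hΩ, ht1])
    exact key x1 t1 ht1 le_rfl this.1.le this.2.le
  rintro ⟨x, t⟩ ⟨a1, a2, a3, a4⟩ hbef hbad
  simp only at a1 a2 a3 a4 hbad hbef
  have htpos : 0 < t := by
    rcases a1.eq_or_lt with h0 | h0
    · subst h0
      have := hS x; have := hR x
      exfalso
      rcases hbad with hb | hb <;> linarith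
    · exact h0
  have hin : ∀ k, |k| ≤ K → ∀ η, 0 < η → η < t → (x + k * η, t - η) ∈ Ω := by
    intro k hk η h0 h1
    have := abs_le.1 hk
    refine ⟨by simp only; linarith, by simp only; linarith, ?_, ?_⟩ <;> simp only <;> nlinarith
  have hcs : ContinuousAt (fun η : ℝ => u (x + 0 * η) (t - η) + φ (τ (x + 0 * η) (t - η))) 0 :=
    (path_deriv (hs.ds h x t htpos) 0).continuousAt
  have hcr : ContinuousAt (fun η : ℝ => u (x + 0 * η) (t - η) - φ (τ (x + 0 * η) (t - η))) 0 :=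
    (path_deriv (hs.dr h x t htpos) 0).continuousAt
  have l1 := lim_le (f := fun η : ℝ => u (x + 0 * η) (t - η) + φ (τ (x + 0 * η) (t - η)) - S
      - ε * (1 + (t - η))) ((hcs.sub continuousAt_const).sub (by fun_prop)) htpos
      (fun η h0 h1 => (hbef _ (hin 0 (by simpa using hK.le) η h0 h1) (by simp [h0])).1)
  have l2 := lim_le (f := fun η : ℝ => R - (u (x + 0 * η) (t - η) - φ (τ (x + 0 * η) (t - η)))
      - ε * (1 + (t - η))) ((continuousAt_const.sub hcr).sub (by fun_prop)) htpos
      (fun η h0 h1 => (hbef _ (hin 0 (by simpa using hK.le) η h0 h1) (by simp [h0])).2)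
  simp only [zero_mul, add_zero, sub_zero] at l1 l2
  have hτ := key x t a1 a2 l1 l2
  have hcK : c (τ x t) ≤ K := h.cAnti hm hτ
  have hcp := h.cpos _ (hs.pos x t a1)
  have dε : HasDerivAt (fun η : ℝ => ε * (1 + (t - η))) (-ε) 0 := by
    have := (((hasDerivAt_id (0:ℝ)).const_sub t).const_add 1).const_mul ε
    simpa using this
  rcases hbad with hb | hb
  · refine deriv_contra (f := fun η : ℝ => u (x + -c (τ x t) * η) (t - η)
      + φ (τ (x + -c (τ x t) * η) (t - η)) - S - ε * (1 + (t - η))) (d := 0 - -ε) (η := t)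
      (((hs.path_s h x t htpos).sub_const S).sub dε) (by linarith) (by simpa using hb) htpos
      (fun η h0 h1 => (hbef _ (hin _ (by rw [abs_neg, abs_of_pos hcp]; exact hcK) η h0 h1)
        (by simp [h0])).1)
  · refine deriv_contra (f := fun η : ℝ => R - (u (x + c (τ x t) * η) (t - η)
      - φ (τ (x + c (τ x t) * η) (t - η))) - ε * (1 + (t - η))) (d := -0 - -ε) (η := t)
      (((hs.path_r h x t htpos).const_sub R).sub dε) (by linarith) (by simpa using hb) htpos
      (fun η h0 h1 => (hbef _ (hin _ (by rw [abs_of_pos hcp]; exact hcK) η h0 h1)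
        (by simp [h0])).2)

theorem Sol.slope (h : PData p c c1 φ) (hs : Sol c τ u Tx Ux) {τm B : ℝ} (hB : 0 ≤ B)
    (hm : 0 < τm) (hτ : ∀ x t, 0 ≤ t → τm ≤ τ x t)
    (hs0 : ∀ x y, x ≤ y → (u y 0 + φ (τ y 0)) - (u x 0 + φ (τ x 0)) ≤ B * (y - x))
    (hr0 : ∀ x y, x ≤ y → (u y 0 - φ (τ y 0)) - (u x 0 - φ (τ x 0)) ≤ B * (y - x)) :
    ∀ x y t, 0 ≤ t → x ≤ y → u y t - u x t ≤ B * (y - x) := by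
  intro x1 y1 t1 ht1 hxy1
  set K := c τm
  have hK : 0 < K := h.cpos _ hm
  have hcK : ∀ x t, 0 ≤ t → c (τ x t) ≤ K := fun x t ht => h.cAnti hm (hτ x t ht)
  suffices hδ : ∀ δ > 0, u y1 t1 - u x1 t1 ≤ B * (y1 - x1) + δ * (1 + t1) by
    apply le_of_forall_pos_le_add
    intro e he
    have := hδ (e / (1 + t1)) (by positivity)
    rwa [div_mul_cancel₀ _ (by positivity)] at this
  intro δ hδ
  set Ω : Set (ℝ × ℝ × ℝ) := {q | 0 ≤ q.2.2 ∧ q.2.2 ≤ t1 ∧ x1 - K * (t1 - q.2.2) ≤ q.1 ∧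
    q.2.1 ≤ y1 + K * (t1 - q.2.2) ∧ q.1 ≤ q.2.1} with hΩ
  have hcomp : IsCompact Ω := by
    apply IsCompact.of_isClosed_subset (isCompact_Icc.prod (isCompact_Icc.prod isCompact_Icc) :
      IsCompact (Icc (x1 - K * t1) (y1 + K * t1) ×ˢ (Icc (x1 - K * t1) (y1 + K * t1)) ×ˢ Icc 0 t1))
    · refine IsClosed.and (isClosed_le ?_ ?_) (IsClosed.and (isClosed_le ?_ ?_) (IsClosed.and
        (isClosed_le ?_ ?_) (IsClosed.and (isClosed_le ?_ ?_) (isClosed_le ?_ ?_)))) <;> fun_prop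
    · rintro ⟨x, y, t⟩ ⟨a1, a2, a3, a4, a5⟩
      simp only at a1 a2 a3 a4 a5
      refine ⟨⟨?_, ?_⟩, ⟨?_, ?_⟩, a1, a2⟩ <;> simp only <;> nlinarith
  have csx : ContinuousOn (fun q : ℝ × ℝ × ℝ => u q.1 q.2.2 + φ (τ q.1 q.2.2)) Ω :=
    (hs.cu.add (hs.cphi h)).comp (f := fun q : ℝ × ℝ × ℝ => (q.1, q.2.2)) (by fun_prop)
      (fun q hq => ⟨trivial, hq.1⟩)
  have csy : ContinuousOn (fun q : ℝ × ℝ × ℝ => u q.2.1 q.2.2 + φ (τ q.2.1 q.2.2)) Ω :=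
    (hs.cu.add (hs.cphi h)).comp (f := fun q : ℝ × ℝ × ℝ => (q.2.1, q.2.2)) (by fun_prop)
      (fun q hq => ⟨trivial, hq.1⟩)
  have crx : ContinuousOn (fun q : ℝ × ℝ × ℝ => u q.1 q.2.2 - φ (τ q.1 q.2.2)) Ω :=
    (hs.cu.sub (hs.cphi h)).comp (f := fun q : ℝ × ℝ × ℝ => (q.1, q.2.2)) (by fun_prop)
      (fun q hq => ⟨trivial, hq.1⟩)
  have cry : ContinuousOn (fun q : ℝ × ℝ × ℝ => u q.2.1 q.2.2 - φ (τ q.2.1 q.2.2)) Ω :=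
    (hs.cu.sub (hs.cphi h)).comp (f := fun q : ℝ × ℝ × ℝ => (q.2.1, q.2.2)) (by fun_prop)
      (fun q hq => ⟨trivial, hq.1⟩)
  have res := firstfail Ω hcomp (fun q => q.2.2) (by fun_prop)
    (fun q => (u q.2.1 q.2.2 + φ (τ q.2.1 q.2.2)) - (u q.1 q.2.2 + φ (τ q.1 q.2.2))
      - (B * (q.2.1 - q.1) + δ * (1 + q.2.2)))
    (fun q => (u q.2.1 q.2.2 - φ (τ q.2.1 q.2.2)) - (u q.1 q.2.2 - φ (τ q.1 q.2.2))
      - (B * (q.2.1 - q.1) + δ * (1 + q.2.2)))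
    ((csy.sub csx).sub (by fun_prop)) ((cry.sub crx).sub (by fun_prop)) ?_
  · have := res (x1, y1, t1) (by simp [hΩ, ht1, hxy1])
    simp only at this
    linarith [this.1, this.2]
  rintro ⟨x, y, t⟩ ⟨a1, a2, a3, a4, a5⟩ hbef hbad
  simp only at a1 a2 a3 a4 a5 hbad hbef
  have htpos : 0 < t := by
    rcases a1.eq_or_lt with h0 | h0
    · subst h0
      have := hs0 x y a5; have := hr0 x y a5
      exfalso
      rcases hbad with hb | hb <;> linarith
    · exact h0
  have hxy : x < y := by
    rcases a5.eq_or_lt with h0 | h0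
    · subst h0
      exfalso
      have : 0 < δ * (1 + t) := by positivity
      rcases hbad with hb | hb <;> linarith
    · exact h0
  -- path inside
  set η0 := min t ((y - x) / (2 * K)) with hη0
  have hη0p : 0 < η0 := by
    have : 0 < y - x := by linarith
    positivity
  have hin : ∀ k l, |k| ≤ K → |l| ≤ K → ∀ η, 0 < η → η < η0 → (x + k * η, y + l * η, t - η) ∈ Ω := by
    intro k l hk hl η h0 h1
    have hk := abs_le.1 hk
    have hl := abs_le.1 hl
    have e1 : η < t := h1.trans_le (min_le_left _ _)
    have e2 : η < (y - x) / (2 * K) := h1.trans_le (min_le_right _ _)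
    rw [lt_div_iff₀ (by positivity)] at e2
    refine ⟨by simp only; linarith, by simp only; linarith, ?_, ?_, ?_⟩ <;> simp only <;> nlinarith
  have hk0 : |(0:ℝ)| ≤ K := by simpa using hK.le
  have hcs : ∀ x, ContinuousAt (fun η : ℝ => u (x + 0 * η) (t - η) + φ (τ (x + 0 * η) (t - η))) 0 :=
    fun x => (path_deriv (hs.ds h x t htpos) 0).continuousAt
  have hcr : ∀ x, ContinuousAt (fun η : ℝ => u (x + 0 * η) (t - η) - φ (τ (x + 0 * η) (t - η))) 0 :=
    fun x => (path_deriv (hs.dr h x t htpos) 0).continuousAt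
  have l1 := lim_le (f := fun η : ℝ => (u (y + 0 * η) (t - η) + φ (τ (y + 0 * η) (t - η)))
      - (u (x + 0 * η) (t - η) + φ (τ (x + 0 * η) (t - η)))
      - (B * ((y + 0 * η) - (x + 0 * η)) + δ * (1 + (t - η))))
      (((hcs y).sub (hcs x)).sub (by fun_prop)) hη0p
      (fun η h0 h1 => (hbef _ (hin 0 0 hk0 hk0 η h0 h1) (by simp [h0])).1)
  have l2 := lim_le (f := fun η : ℝ => (u (y + 0 * η) (t - η) - φ (τ (y + 0 * η) (t - η)))
      - (u (x + 0 * η) (t - η) - φ (τ (x + 0 * η) (t - η)))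
      - (B * ((y + 0 * η) - (x + 0 * η)) + δ * (1 + (t - η))))
      (((hcr y).sub (hcr x)).sub (by fun_prop)) hη0p
      (fun η h0 h1 => (hbef _ (hin 0 0 hk0 hk0 η h0 h1) (by simp [h0])).2)
  simp only [zero_mul, add_zero, sub_zero] at l1 l2
  have hcx := h.cpos _ (hs.pos x t a1)
  have hcy := h.cpos _ (hs.pos y t a1)
  have dε : ∀ k l, HasDerivAt (fun η : ℝ => B * ((y + l * η) - (x + k * η)) + δ * (1 + (t - η)))
      (B * (l - k) - δ) 0 := by
    intro k l
    have h1 := (((hasDerivAt_id (0:ℝ)).const_sub t).const_add 1).const_mul δ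
    have h2 := ((((hasDerivAt_id (0:ℝ)).const_mul l).const_add y).sub
      (((hasDerivAt_id (0:ℝ)).const_mul k).const_add x)).const_mul B
    exact (h2.add h1).congr_deriv (by ring)
  rcases hbad with hb | hb
  · have hcc : c (τ x t) ≤ c (τ y t) := by
      apply h.cAnti (hs.pos y t a1)
      by_contra hlt; push Not at hlt
      have := h.phiAnti (hs.pos x t a1) (hs.pos y t a1) hlt
      linarith
    refine deriv_contra (f := fun η : ℝ => (u (y + -c (τ y t) * η) (t - η)
      + φ (τ (y + -c (τ y t) * η) (t - η))) - (u (x + -c (τ x t) * η) (t - η)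
      + φ (τ (x + -c (τ x t) * η) (t - η))) -
      (B * ((y + -c (τ y t) * η) - (x + -c (τ x t) * η)) + δ * (1 + (t - η)))) (η := η0)
      (((hs.path_s h y t htpos).sub (hs.path_s h x t htpos)).sub (dε _ _))
      (by nlinarith) (by simpa using hb) hη0p
      (fun η h0 h1 => (hbef _ (hin _ _ (by rw [abs_neg, abs_of_pos hcx]; exact hcK _ _ a1)
        (by rw [abs_neg, abs_of_pos hcy]; exact hcK _ _ a1) η h0 h1) (by simp [h0])).1)
  · have hcc : c (τ y t) ≤ c (τ x t) := by
      apply h.cAnti (hs.pos x t a1)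
      by_contra hlt; push Not at hlt
      have := h.phiAnti (hs.pos y t a1) (hs.pos x t a1) hlt
      linarith
    refine deriv_contra (f := fun η : ℝ => (u (y + c (τ y t) * η) (t - η)
      - φ (τ (y + c (τ y t) * η) (t - η))) - (u (x + c (τ x t) * η) (t - η)
      - φ (τ (x + c (τ x t) * η) (t - η))) -
      (B * ((y + c (τ y t) * η) - (x + c (τ x t) * η)) + δ * (1 + (t - η)))) (η := η0)
      (((hs.path_r h y t htpos).sub (hs.path_r h x t htpos)).sub (dε _ _))
      (by nlinarith) (by simpa using hb) hη0p
      (fun η h0 h1 => (hbef _ (hin _ _ (by rw [abs_of_pos hcx]; exact hcK _ _ a1)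
        (by rw [abs_of_pos hcy]; exact hcK _ _ a1) η h0 h1) (by simp [h0])).2)
end


lemma transport (F Fx C Cx : ℝ → ℝ → ℝ) (e T : ℝ) (he : 0 < e) (heT : e ≤ T)
    (dF : ∀ x t, 0 < t → HasFDerivAt (fun q : ℝ × ℝ => F q.1 q.2)
      (Fx x t • ContinuousLinearMap.fst ℝ ℝ ℝ
        + (-(C x t) * Fx x t) • ContinuousLinearMap.snd ℝ ℝ ℝ) (x, t))
    (cFx : ContinuousOn (fun q : ℝ × ℝ => Fx q.1 q.2) (univ ×ˢ Ioi 0))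
    (dC : ∀ x t, 0 < t → HasDerivAt (fun x => C x t) (Cx x t) x)
    (cCx : ContinuousOn (fun q : ℝ × ℝ => Cx q.1 q.2) (univ ×ˢ Ioi 0))
    (X J : ℝ → ℝ) (dX : ∀ t ∈ Icc e T, HasDerivWithinAt X (C (X t) t) (Icc e T) t)
    (dJ : ∀ t ∈ Icc e T, HasDerivWithinAt J (Cx (X t) t * J t) (Icc e T) t) :
    Fx (X T) T * J T = Fx (X e) e * J e := by
  have cX : ContinuousOn X (Icc e T) := fun t ht => (dX t ht).continuousWithinAt
  have cJ : ContinuousOn J (Icc e T) := fun t ht => (dJ t ht).continuousWithinAt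
  obtain ⟨Mj0, hMj0⟩ := isCompact_Icc.exists_bound_of_continuousOn cJ
  set Mj := max Mj0 1 with hMjd
  have hMj : ∀ t ∈ Icc e T, |J t| ≤ Mj := fun t ht => (hMj0 t ht).trans (le_max_left _ _)
  have Mjpos : 0 < Mj := lt_of_lt_of_le one_pos (le_max_right _ _)
  set S : Set (ℝ × ℝ) := Icc e T ×ˢ Icc (-Mj) Mj with hS
  have hSc : IsCompact S := isCompact_Icc.prod isCompact_Icc
  have cmap : ContinuousOn (fun q : ℝ × ℝ => (X q.1 + q.2, q.1)) S :=
    ((cX.comp continuousOn_fst (fun q hq => hq.1)).add continuousOn_snd).prodMk continuousOn_fst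
  have mmap : MapsTo (fun q : ℝ × ℝ => (X q.1 + q.2, q.1)) S (univ ×ˢ Ioi 0) :=
    fun q hq => ⟨trivial, he.trans_le hq.1.1⟩
  obtain ⟨Mf0, hMf0⟩ := hSc.exists_bound_of_continuousOn (cFx.comp cmap mmap)
  set Mf := max Mf0 1
  have Mfpos : 0 < Mf := lt_of_lt_of_le one_pos (le_max_right _ _)
  have hMf : ∀ t ∈ Icc e T, ∀ y, |y| ≤ Mj → |Fx (X t + y) t| ≤ Mf := fun t ht y hy =>
    (hMf0 (t, y) ⟨ht, abs_le.1 hy⟩).trans (le_max_left _ _)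
  have huc := hSc.uniformContinuousOn_of_continuous (cCx.comp cmap mmap)
  -- main estimate
  have main : ∀ η > 0, ∃ δ > 0, ∀ h, |h| < δ →
      |F (X T + h * J T) T - F (X e + h * J e) e| ≤ Mf * (η * (|h| * Mj)) * (T - e) := by
    intro η hη
    obtain ⟨δ, hδ, hu⟩ := Metric.uniformContinuousOn_iff_le.1 huc η hη
    refine ⟨min 1 (δ / Mj), by positivity, ?_⟩
    intro h hh
    have h1 : |h| < 1 := hh.trans_le (min_le_left _ _)
    have h2 : |h| * Mj < δ := by
      have := hh.trans_le (min_le_right _ _); rwa [lt_div_iff₀ Mjpos] at this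
    have hb : ∀ t ∈ Icc e T, |h * J t| ≤ |h| * Mj := fun t ht => by
      rw [abs_mul]; exact mul_le_mul_of_nonneg_left (hMj t ht) (abs_nonneg _)
    have hb' : ∀ t ∈ Icc e T, |h * J t| ≤ Mj := fun t ht => (hb t ht).trans (by nlinarith)
    have dpath : ∀ t ∈ Icc e T, HasDerivWithinAt (fun t => F (X t + h * J t) t)
        (Fx (X t + h * J t) t * (C (X t) t + h * (Cx (X t) t * J t) - C (X t + h * J t) t))
        (Icc e T) t := by
      intro t ht
      have d1 : HasDerivWithinAt (fun t => (X t + h * J t, t))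
          (C (X t) t + h * (Cx (X t) t * J t), 1) (Icc e T) t :=
        ((dX t ht).add ((dJ t ht).const_mul h)).prodMk (hasDerivWithinAt_id _ _)
      have := HasFDerivAt.comp_hasDerivWithinAt (f := fun t => (X t + h * J t, t)) t
        (dF (X t + h * J t) t (he.trans_le ht.1)) d1
      exact this.congr_deriv (by simp; ring)
    have bnd : ∀ t ∈ Icc e T,
        ‖Fx (X t + h * J t) t * (C (X t) t + h * (Cx (X t) t * J t) - C (X t + h * J t) t)‖
          ≤ Mf * (η * (|h| * Mj)) := by
      intro t ht
      rw [norm_mul]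
      refine mul_le_mul (hMf t ht _ (hb' t ht)) ?_ (norm_nonneg _) Mfpos.le
      -- mean value
      have mv := Convex.norm_image_sub_le_of_norm_hasDerivWithin_le
        (f := fun y => C (X t + y) t - y * Cx (X t) t)
        (f' := fun y => Cx (X t + y) t - Cx (X t) t) (C := η)
        (s := Icc (-(|h| * Mj)) (|h| * Mj)) (x := 0) (y := h * J t)
        (fun y hy => by
          have d1 := (dC (X t + y) t (he.trans_le ht.1))
          have d2 : HasDerivAt (fun y => X t + y) 1 y := (hasDerivAt_id y).const_add _
          have d3 := (HasDerivAt.comp y d1 d2).sub ((hasDerivAt_id y).mul_const (Cx (X t) t))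
          exact (d3.congr_deriv (by ring)).hasDerivWithinAt)
        (fun y hy => by
          have hy' := abs_le.2 ⟨hy.1, hy.2⟩
          have := hu (t, y) ⟨ht, abs_le.1 (hy'.trans (by nlinarith))⟩ (t, 0)
            ⟨ht, by constructor <;> linarith⟩ (by
              simp only [Prod.dist_eq, dist_self, Real.dist_eq, sub_zero]
              exact max_le hδ.le (hy'.trans h2.le))
          simpa [Real.dist_eq] using this)
        (convex_Icc _ _) ⟨neg_nonpos.2 (by positivity), by positivity⟩ (abs_le.1 (hb t ht))
      simp only [add_zero, zero_mul, sub_zero] at mv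
      rw [← norm_neg]
      calc ‖-(C (X t) t + h * (Cx (X t) t * J t) - C (X t + h * J t) t)‖
          = ‖C (X t + h * J t) t - h * J t * Cx (X t) t - C (X t) t‖ := by congr 1; ring
        _ ≤ η * ‖h * J t‖ := mv
        _ ≤ _ := mul_le_mul_of_nonneg_left (hb t ht) hη.le
    have := Convex.norm_image_sub_le_of_norm_hasDerivWithin_le dpath bnd (convex_Icc e T)
      (left_mem_Icc.2 heT) (right_mem_Icc.2 heT)
    rwa [Real.norm_eq_abs, Real.norm_eq_abs, abs_of_nonneg (sub_nonneg.2 heT)] at this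
  set D : ℝ → ℝ := fun h => F (X T + h * J T) T - F (X e + h * J e) e with hD
  have D0 : D 0 = 0 := by
    obtain ⟨δ, hδ, hh⟩ := main 1 one_pos
    have := hh 0 (by simpa using hδ)
    simpa [hD] using this
  have dd : ∀ t, 0 < t → HasDerivAt (fun h => F (X t + h * J t) t) (Fx (X t) t * J t) 0 := by
    intro t ht
    have d1 : HasDerivAt (fun h : ℝ => (X t + h * J t, t)) (J t, 0) 0 := by
      have := ((hasDerivAt_id (0:ℝ)).mul_const (J t)).const_add (X t)
      exact (this.congr_deriv (by simp)).prodMk (hasDerivAt_const _ _)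
    have d2 : HasFDerivAt (fun q : ℝ × ℝ => F q.1 q.2) (Fx (X t) t • ContinuousLinearMap.fst ℝ ℝ ℝ
        + (-(C (X t) t) * Fx (X t) t) • ContinuousLinearMap.snd ℝ ℝ ℝ)
        ((fun h : ℝ => (X t + h * J t, t)) 0) := by
      simpa using (dF (X t) t ht)
    have d3 := d2.comp_hasDerivAt 0 d1
    exact d3.congr_deriv (by simp)
  have dD : HasDerivAt D (Fx (X T) T * J T - Fx (X e) e * J e) 0 :=
    (dd T (he.trans_le heT)).sub (dd e he)
  have dD0 : HasDerivAt D 0 0 := by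
    rw [hasDerivAt_iff_isLittleO, Asymptotics.isLittleO_iff]
    intro k hk
    have hTe : 0 < T - e + 1 := by linarith
    obtain ⟨δ, hδ, hh⟩ := main (k / (Mf * Mj * (T - e + 1))) (by positivity)
    filter_upwards [Metric.ball_mem_nhds 0 hδ] with h hb
    rw [mem_ball_zero_iff] at hb
    have := hh h hb
    simp only [D0, sub_zero, smul_zero, Real.norm_eq_abs]
    refine this.trans ?_
    have e1 : Mf * (k / (Mf * Mj * (T - e + 1)) * (|h| * Mj)) * (T - e)
      = k * |h| * ((T - e) / (T - e + 1)) := by field_simp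
    rw [e1]
    have : (T - e) / (T - e + 1) ≤ 1 := by rw [div_le_one hTe]; linarith
    have h0 : 0 ≤ k * |h| := by positivity
    nlinarith
  have := dD.unique dD0
  linarith

section
variable {p c c1 φ : ℝ → ℝ} {τ u Tx Ux : ℝ → ℝ → ℝ}

lemma line_x {F : ℝ × ℝ → ℝ} {L : ℝ × ℝ →L[ℝ] ℝ} {x t : ℝ} (hF : HasFDerivAt F L (x, t)) :
    HasDerivAt (fun y : ℝ => F (y, t)) (L (1, 0)) x :=
  hF.comp_hasDerivAt x ((hasDerivAt_id x).prodMk (hasDerivAt_const _ _))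

lemma line_t {F : ℝ × ℝ → ℝ} {L : ℝ × ℝ →L[ℝ] ℝ} {x t : ℝ} (hF : HasFDerivAt F L (x, t)) :
    HasDerivAt (fun y : ℝ => F (x, y)) (L (0, 1)) t :=
  hF.comp_hasDerivAt t ((hasDerivAt_const _ _).prodMk (hasDerivAt_id t))

lemma Sol.upper (hs : Sol c τ u Tx Ux) {B : ℝ}
    (hsl : ∀ x y t, 0 ≤ t → x ≤ y → u y t - u x t ≤ B * (y - x)) :
    ∀ x t, 0 ≤ t → τ x t ≤ τ x 0 + B * t := by
  have hU : ∀ x t, 0 < t → Ux x t ≤ B := by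
    intro x t ht
    have d : HasDerivAt (fun y => u y t) (Ux x t) x :=
      (line_x (hs.du x t ht)).congr_deriv (by simp)
    by_contra hcon; push Not at hcon
    have d2 : HasDerivAt (fun h => u (x + h) t - u x t - B * h - 0) (Ux x t - B) 0 := by
      have e1 : HasDerivAt (fun h => u (x + h) t) (Ux x t) 0 := by
        have d' : HasDerivAt (fun y => u y t) (Ux x t) (x + 0) := by simpa using d
        exact d'.comp_const_add x 0
      have := ((e1.sub_const (u x t)).sub ((hasDerivAt_id (0:ℝ)).const_mul B)).sub_const 0
      exact this.congr_deriv (by ring)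
    have d3 : HasDerivAt (fun h => u (x + h) t - u x t - (B + (Ux x t - B) / 2) * h)
        ((Ux x t - B) / 2) 0 := by
      have := d2.sub ((hasDerivAt_id (0:ℝ)).const_mul ((Ux x t - B) / 2))
      refine (this.congr_deriv (by ring)).congr_of_eventuallyEq (Eventually.of_forall fun h => ?_)
      simp; ring
    refine deriv_contra d3 (by linarith) (by simp) one_pos ?_
    intro h h0 _
    have := hsl x (x + h) t ht.le (by linarith)
    nlinarith
  intro x t ht
  have := Convex.image_sub_le_mul_sub_of_deriv_le (convex_Icc 0 t) (f := fun s => τ x s) (C := B)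
    (hs.ct.comp (f := fun s : ℝ => (x, s)) (by fun_prop) (fun s hs => ⟨trivial, hs.1⟩))
    (fun s hs' => by
      rw [interior_Icc] at hs'
      exact (line_t (hs.dt x s hs'.1)).differentiableAt.differentiableWithinAt)
    (fun s hs' => by
      rw [interior_Icc] at hs'
      rw [(line_t (hs.dt x s hs'.1)).deriv]
      simpa using hU x s hs'.1)
    0 ⟨le_rfl, ht⟩ t ⟨ht, le_rfl⟩ ht
  linarith

lemma Sol.char (h : PData p c c1 φ) (hs : Sol c τ u Tx Ux) {τm : ℝ} (hm : 0 < τm)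
    (hτ : ∀ x t, 0 ≤ t → τm ≤ τ x t) (x0 e T : ℝ) (he : 0 < e) (heT : e ≤ T) :
    ∃ X : ℝ → ℝ, X e = x0 ∧ ∀ t ∈ Icc e T, HasDerivWithinAt X (c (τ (X t) t)) (Icc e T) t := by
  set K := c τm
  have hK : 0 < K := h.cpos _ hm
  set a : ℝ := K * (T - e) with ha
  have ha0 : 0 ≤ a := mul_nonneg hK.le (by linarith)
  have cc1 : ContinuousOn (fun q : ℝ × ℝ => c1 (τ q.1 q.2) * Tx q.1 q.2)
      (Icc (x0 - a) (x0 + a) ×ˢ Icc e T) := by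
    have hsub : (Icc (x0 - a) (x0 + a) ×ˢ Icc e T) ⊆ univ ×ˢ Ioi (0:ℝ) :=
      fun q hq => ⟨trivial, he.trans_le hq.2.1⟩
    refine ContinuousOn.mul ?_ (hs.cTx.mono hsub)
    refine h.c1cont.comp (hs.ct.mono fun q hq => ⟨trivial, (he.trans_le hq.2.1).le⟩) ?_
    exact fun q hq => hs.pos _ _ (he.trans_le hq.2.1).le
  obtain ⟨Lc, hLc⟩ := (isCompact_Icc.prod isCompact_Icc).exists_bound_of_continuousOn cc1
  have pl : IsPicardLindelof (fun t x => c (τ x t)) (⟨e, left_mem_Icc.2 heT⟩ : Icc e T) x0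
      ⟨a, ha0⟩ 0 ⟨K, hK.le⟩ (Real.toNNReal Lc) := by
    constructor
    · intro t ht
      have htp : 0 < t := he.trans_le ht.1
      apply Convex.lipschitzOnWith_of_nnnorm_hasDerivWithin_le (convex_closedBall _ _)
        (f' := fun x => c1 (τ x t) * Tx x t)
      · intro x hx
        have := (h.dc _ (hs.pos x t htp.le)).comp x (line_x (hs.dt x t htp))
        exact (this.congr_deriv (by simp)).hasDerivWithinAt
      · intro x hx
        rw [Real.closedBall_eq_Icc] at hx
        have := hLc (x, t) ⟨hx, ht⟩
        rw [← NNReal.coe_le_coe, coe_nnnorm]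
        exact this.trans (Real.le_coe_toNNReal _)
    · intro x hx
      intro t ht
      have htp : 0 < t := he.trans_le ht.1
      exact ((h.dc _ (hs.pos x t htp.le)).comp t (line_t (hs.dt x t htp))).continuousAt.continuousWithinAt
    · intro t ht x hx
      have htp : 0 < t := he.trans_le ht.1
      rw [Real.norm_of_nonneg (h.cpos _ (hs.pos x t htp.le)).le]
      exact h.cAnti hm (hτ x t htp.le)
    · simp [ha, heT]
      exact le_rfl
  obtain ⟨X, hX0, hX⟩ := pl.exists_eq_forall_mem_Icc_hasDerivWithinAt₀
  exact ⟨X, hX0, hX⟩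

theorem Sol.blowup (h : PData p c c1 φ) (hs : Sol c τ u Tx Ux) {τm B M : ℝ} (hm : 0 < τm)
    (hB : 0 < B) (hM : 0 ≤ M)
    (hτ : ∀ x t, 0 ≤ t → τm ≤ τ x t) (hup : ∀ x t, 0 ≤ t → τ x t ≤ M + B * t)
    (x0 e : ℝ) (he : 0 < e) : 0 ≤ Ux x0 e - c (τ x0 e) * Tx x0 e := by
  by_contra hneg
  push Not at hneg
  set σ := Ux x0 e - c (τ x0 e) * Tx x0 e with hσ
  obtain ⟨ε, hε, hgr⟩ := h.growth τm hm
  set k := -σ * ε / B with hk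
  have kpos : 0 < k := by have : 0 < -σ := by linarith
                          positivity
  set Q := 1 / √(c (τ x0 e)) + k * Real.log (1 + M + B * e) with hQ
  set T := max e (Real.exp (Q / k + 1) / B) with hT
  have heT : e ≤ T := le_max_left _ _
  obtain ⟨X, hX0, dX⟩ := hs.char h hm hτ x0 e T he heT
  have tpos : ∀ t ∈ Icc e T, 0 < t := fun t ht => he.trans_le ht.1
  have cX : ContinuousOn X (Icc e T) := fun t ht => (dX t ht).continuousWithinAt
  have cCx : ContinuousOn (fun q : ℝ × ℝ => c1 (τ q.1 q.2) * Tx q.1 q.2) (univ ×ˢ Ioi 0) := by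
    refine ContinuousOn.mul ?_ hs.cTx
    refine h.c1cont.comp (hs.ct.mono fun q hq => ⟨trivial, (show (0:ℝ) < q.2 from hq.2).le⟩) ?_
    exact fun q hq => hs.pos _ _ (show (0:ℝ) < q.2 from hq.2).le
  have ccont : ContinuousOn c (Ioi 0) := fun v hv => (h.dc v hv).continuousAt.continuousWithinAt
  have cFx : ContinuousOn (fun q : ℝ × ℝ => Ux q.1 q.2 - c (τ q.1 q.2) * Tx q.1 q.2)
      (univ ×ˢ Ioi 0) := by
    refine hs.cUx.sub (ContinuousOn.mul ?_ hs.cTx)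
    refine ccont.comp (hs.ct.mono fun q hq => ⟨trivial, (show (0:ℝ) < q.2 from hq.2).le⟩) ?_
    exact fun q hq => hs.pos _ _ (show (0:ℝ) < q.2 from hq.2).le
  have ckk : ContinuousOn (fun t => c1 (τ (X t) t) * Tx (X t) t) (Icc e T) :=
    cCx.comp (f := fun t => (X t, t)) (cX.prodMk continuousOn_id) (fun t ht => ⟨trivial, tpos t ht⟩)
  -- J
  set J : ℝ → ℝ := fun t => Real.exp (∫ s in e..t, c1 (τ (X s) s) * Tx (X s) s) with hJ
  have dJ : ∀ t ∈ Icc e T, HasDerivWithinAt J (c1 (τ (X t) t) * Tx (X t) t * J t) (Icc e T) t := by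
    intro t ht
    have : HasDerivWithinAt (fun t => ∫ s in e..t, c1 (τ (X s) s) * Tx (X s) s)
        (c1 (τ (X t) t) * Tx (X t) t) (Icc e T) t := by
      have : Fact (t ∈ Icc e T) := ⟨ht⟩
      apply intervalIntegral.integral_hasDerivWithinAt_right
      · apply ContinuousOn.intervalIntegrable
        rw [uIcc_of_le ht.1]
        exact ckk.mono (Icc_subset_Icc le_rfl ht.2)
      · exact ckk.stronglyMeasurableAtFilter_nhdsWithin measurableSet_Icc t
      · exact ckk t ht
    exact this.exp.congr_deriv (by simp [hJ]; ring)
  have Jpos : ∀ t, 0 < J t := fun t => Real.exp_pos _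
  have Je : J e = 1 := by simp [hJ]
  have htr : ∀ t ∈ Icc e T, (Ux (X t) t - c (τ (X t) t) * Tx (X t) t) * J t = σ := by
    intro t ht
    have hsub : Icc e t ⊆ Icc e T := Icc_subset_Icc le_rfl ht.2
    have := transport (fun x t => u x t + φ (τ x t)) (fun x t => Ux x t - c (τ x t) * Tx x t)
      (fun x t => c (τ x t)) (fun x t => c1 (τ x t) * Tx x t) e t he ht.1
      (fun x t ht => hs.ds h x t ht) cFx
      (fun x t ht => ((h.dc _ (hs.pos x t ht.le)).comp x (line_x (hs.dt x t ht))).congr_deriv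
        (by simp)) cCx X J
      (fun s hs' => (dX s (hsub hs')).mono hsub) (fun s hs' => (dJ s (hsub hs')).mono hsub)
    rw [this, Je, hX0, mul_one]
  set H : ℝ → ℝ := fun t => J t / √(c (τ (X t) t)) + k * Real.log (1 + M + B * t) with hH
  have dτ : ∀ t ∈ Icc e T, HasDerivWithinAt (fun t => τ (X t) t)
      (c (τ (X t) t) * Tx (X t) t + Ux (X t) t) (Icc e T) t := by
    intro t ht
    have := HasFDerivAt.comp_hasDerivWithinAt (f := fun t => (X t, t)) t (hs.dt (X t) t (tpos t ht))
      ((dX t ht).prodMk (hasDerivWithinAt_id _ _))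
    exact this.congr_deriv (by simp; ring)
  have dH : ∀ t ∈ Icc e T, HasDerivWithinAt H
      (σ * (-c1 (τ (X t) t) / (2 * (c (τ (X t) t) * √(c (τ (X t) t))))) + k * (B / (1 + M + B * t)))
      (Icc e T) t := by
    intro t ht
    have hp := hs.pos (X t) t (tpos t ht).le
    have hc := h.cpos _ hp
    have d1 := (dJ t ht).div ((HasDerivAt.comp_hasDerivWithinAt (h := fun t => τ (X t) t) t (h.dc _ hp) (dτ t ht)).sqrt hc.ne')
      (Real.sqrt_pos.2 hc).ne'
    have hpos : 0 < 1 + M + B * t := by have := tpos t ht; positivity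
    have d2 : HasDerivAt (fun t => k * Real.log (1 + M + B * t)) (k * (B / (1 + M + B * t))) t := by
      have := (((hasDerivAt_id t).const_mul B).const_add (1 + M)).log hpos.ne'
      exact (this.const_mul k).congr_deriv (by simp)
    refine (d1.add d2.hasDerivWithinAt).congr_deriv ?_
    congr 1
    rw [← htr t ht]
    simp only [Function.comp]
    have e1 : √(c (τ (X t) t)) ^ 2 = c (τ (X t) t) := Real.sq_sqrt hc.le
    set w := √(c (τ (X t) t)) with hw
    have hw0 : 0 < w := Real.sqrt_pos.2 hc
    rw [← e1]
    field_simp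
    ring
  have hanti : AntitoneOn H (Icc e T) := by
    apply antitoneOn_of_hasDerivWithinAt_nonpos (convex_Icc e T)
      (fun t ht => (dH t ht).continuousWithinAt)
      (fun t ht => (dH t (interior_subset ht)).mono interior_subset)
    intro t ht
    have ht := interior_subset ht
    have hpt := tpos t ht
    have g1 := hgr _ (hτ (X t) t hpt.le)
    have g2 := hup (X t) t hpt.le
    have g3 := hs.pos (X t) t hpt.le
    have g4 : ε / (1 + M + B * t) ≤ ε / (1 + τ (X t) t) := by
      apply div_le_div_of_nonneg_left hε.le <;> linarith
    have g5 : k * (B / (1 + M + B * t)) = -σ * (ε / (1 + M + B * t)) := by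
      rw [hk]; field_simp
    rw [g5]
    have := mul_le_mul_of_nonneg_left (g4.trans g1) (by linarith : 0 ≤ -σ)
    linarith
  have hfin := hanti (left_mem_Icc.2 heT) (right_mem_Icc.2 heT) heT
  simp only [hH, hX0, Je] at hfin
  have hJT : 0 ≤ J T / √(c (τ (X T) T)) := by have := Jpos T; positivity
  have h1 : k * Real.log (1 + M + B * T) ≤ Q := by linarith
  have h2 : Real.exp (Q / k + 1) ≤ 1 + M + B * T := by
    have : Real.exp (Q / k + 1) / B ≤ T := le_max_right _ _
    rw [div_le_iff₀ hB] at this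
    linarith
  have h3 := Real.log_le_log (Real.exp_pos _) h2
  rw [Real.log_exp] at h3
  have h4 : Q + k ≤ k * Real.log (1 + M + B * T) := by
    calc Q + k = k * (Q / k + 1) := by field_simp
      _ ≤ _ := by gcongr
  linarith
end


section
variable {p c c1 φ : ℝ → ℝ} {τ u Tx Ux : ℝ → ℝ → ℝ}

lemma clm_decomp (L : ℝ × ℝ →L[ℝ] ℝ) :
    L = (L (1, 0)) • ContinuousLinearMap.fst ℝ ℝ ℝ + (L (0, 1)) • ContinuousLinearMap.snd ℝ ℝ ℝ := by
  ext <;> simp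

lemma Sol.of_gen (h : PData p c c1 φ) (hg : GenPSysSol p (Ici 0) 1 τ u) :
    Sol c τ u (fun x t => deriv (fun x' => τ x' t) x) (fun x t => deriv (fun x' => u x' t) x) := by
  obtain ⟨hpos, hτ, hu, e1, e2⟩ := hg
  have hop : IsOpen (univ ×ˢ Ioi (0:ℝ) : Set (ℝ × ℝ)) := isOpen_univ.prod isOpen_Ioi
  have hsub : (univ ×ˢ Ioi (0:ℝ) : Set (ℝ × ℝ)) ⊆ univ ×ˢ Ici 0 :=
    prod_mono_right Ioi_subset_Ici_self
  have hτ' : ContDiffOn ℝ 1 (fun q : ℝ × ℝ => τ q.1 q.2) (univ ×ˢ Ioi 0) := hτ.mono hsub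
  have hu' : ContDiffOn ℝ 1 (fun q : ℝ × ℝ => u q.1 q.2) (univ ×ˢ Ioi 0) := hu.mono hsub
  have dτ : ∀ x t, 0 < t → DifferentiableAt ℝ (fun q : ℝ × ℝ => τ q.1 q.2) (x, t) := fun x t ht =>
    (hτ'.contDiffAt (hop.mem_nhds (show (x, t) ∈ univ ×ˢ Ioi (0:ℝ) from ⟨trivial, ht⟩))).differentiableAt (by simp)
  have du : ∀ x t, 0 < t → DifferentiableAt ℝ (fun q : ℝ × ℝ => u q.1 q.2) (x, t) := fun x t ht =>
    (hu'.contDiffAt (hop.mem_nhds (show (x, t) ∈ univ ×ˢ Ioi (0:ℝ) from ⟨trivial, ht⟩))).differentiableAt (by simp)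
  have fx : ∀ {F : ℝ → ℝ → ℝ} x t, DifferentiableAt ℝ (fun q : ℝ × ℝ => F q.1 q.2) (x, t) →
      deriv (fun x' => F x' t) x = fderiv ℝ (fun q : ℝ × ℝ => F q.1 q.2) (x, t) (1, 0) :=
    fun x t hd => (line_x hd.hasFDerivAt).deriv
  have ft : ∀ {F : ℝ → ℝ → ℝ} x t, DifferentiableAt ℝ (fun q : ℝ × ℝ => F q.1 q.2) (x, t) →
      deriv (fun t' => F x t') t = fderiv ℝ (fun q : ℝ × ℝ => F q.1 q.2) (x, t) (0, 1) :=
    fun x t hd => (line_t hd.hasFDerivAt).deriv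
  have cx : ∀ {F : ℝ → ℝ → ℝ}, ContDiffOn ℝ 1 (fun q : ℝ × ℝ => F q.1 q.2) (univ ×ˢ Ioi 0) →
      ContinuousOn (fun q : ℝ × ℝ => deriv (fun x' => F x' q.2) q.1) (univ ×ˢ Ioi 0) := by
    intro F hF
    have h1 := hF.continuousOn_fderiv_of_isOpen hop le_rfl
    have h2 := h1.clm_apply (continuousOn_const (c := ((1:ℝ), (0:ℝ))))
    refine h2.congr ?_
    intro q hq
    exact fx q.1 q.2 ((hF.contDiffAt (hop.mem_nhds hq)).differentiableAt (by simp))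
  refine ⟨fun x t ht => hpos x t ht, hτ.continuousOn, hu.continuousOn, ?_, ?_, cx hτ', cx hu'⟩
  · intro x t ht
    have hd := (dτ x t ht)
    have hh := hd.hasFDerivAt
    rw [clm_decomp (fderiv ℝ _ _), ← fx x t hd, ← ft x t hd] at hh
    have : deriv (fun t' => τ x t') t = deriv (fun x' => u x' t) x := by
      linarith [e1 x t (le_of_lt ht)]
    rwa [this] at hh
  · intro x t ht
    have hd := (du x t ht)
    have hh := hd.hasFDerivAt
    rw [clm_decomp (fderiv ℝ _ _), ← fx x t hd, ← ft x t hd] at hh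
    have h1 : HasDerivAt (fun x' => p (τ x' t)) (-(c (τ x t))^2 * deriv (fun x' => τ x' t) x) x := by
      have hx := line_x (dτ x t ht).hasFDerivAt
      exact (h.dp _ (hpos x t (le_of_lt ht))).comp x hx.differentiableAt.hasDerivAt
    have : deriv (fun t' => u x t') t = (c (τ x t))^2 * deriv (fun x' => τ x' t) x := by
      have := e2 x t (le_of_lt ht)
      rw [h1.deriv] at this
      linarith
    rwa [this] at hh

lemma Sol.reflect (hs : Sol c τ u Tx Ux) :
    Sol c (fun x t => τ (-x) t) (fun x t => -u (-x) t) (fun x t => -Tx (-x) t)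
      (fun x t => Ux (-x) t) := by
  have hm : Continuous (fun q : ℝ × ℝ => (-q.1, q.2)) := by fun_prop
  have hm1 : MapsTo (fun q : ℝ × ℝ => (-q.1, q.2)) (univ ×ˢ Ici 0) (univ ×ˢ Ici 0) :=
    fun q hq => ⟨trivial, hq.2⟩
  have hm2 : MapsTo (fun q : ℝ × ℝ => (-q.1, q.2)) (univ ×ˢ Ioi 0) (univ ×ˢ Ioi 0) :=
    fun q hq => ⟨trivial, hq.2⟩
  have hd : ∀ q : ℝ × ℝ, HasFDerivAt (fun q : ℝ × ℝ => (-q.1, q.2))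
      ((-ContinuousLinearMap.fst ℝ ℝ ℝ).prod (ContinuousLinearMap.snd ℝ ℝ ℝ)) q := fun q =>
    (hasFDerivAt_fst.neg).prodMk hasFDerivAt_snd
  refine ⟨fun x t ht => hs.pos _ _ ht, hs.ct.comp hm.continuousOn hm1,
    (hs.cu.comp hm.continuousOn hm1).neg, ?_, ?_, (hs.cTx.comp hm.continuousOn hm2).neg,
    hs.cUx.comp hm.continuousOn hm2⟩
  · intro x t ht
    have := HasFDerivAt.comp (f := fun q : ℝ × ℝ => (-q.1, q.2)) (x, t) (hs.dt (-x) t ht) (hd (x, t))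
    refine this.congr_fderiv ?_
    ext <;> simp
  · intro x t ht
    have := (HasFDerivAt.comp (f := fun q : ℝ × ℝ => (-q.1, q.2)) (x, t) (hs.du (-x) t ht) (hd (x, t))).neg
    refine this.congr_fderiv ?_
    ext <;> simp

lemma Sol.mono_s (h : PData p c c1 φ) (hs : Sol c τ u Tx Ux) {M₁ M₂ : ℝ}
    (hA : AssumptionA M₁ M₂ (fun x => τ x 0) (fun x => u x 0)) :
    Monotone (fun x => u x 0 + φ (τ x 0)) := by
  obtain ⟨hτ, hu, h1, h2, hb, hl⟩ := hA
  have bt : ∀ x, τ x 0 ≤ M₁ := fun x => by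
    have := hb x; have := le_abs_self (τ x 0); 
    have := abs_nonneg (deriv (fun x => τ x 0) x); have := abs_nonneg (u x 0)
    have := abs_nonneg (deriv (fun x => u x 0) x); linarith
  have bu : ∀ x, |u x 0| ≤ M₁ := fun x => by
    have := hb x; have := abs_nonneg (τ x 0); 
    have := abs_nonneg (deriv (fun x => τ x 0) x); 
    have := abs_nonneg (deriv (fun x => u x 0) x); linarith
  have bdt : ∀ x, |deriv (fun x => τ x 0) x| ≤ M₁ := fun x => by
    have := hb x; have := abs_nonneg (τ x 0); 
    have := abs_nonneg (u x 0)
    have := abs_nonneg (deriv (fun x => u x 0) x); linarith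
  have bdu : ∀ x, |deriv (fun x => u x 0) x| ≤ M₁ := fun x => by
    have := hb x; have := abs_nonneg (τ x 0); 
    have := abs_nonneg (u x 0)
    have := abs_nonneg (deriv (fun x => τ x 0) x); linarith
  have pos : ∀ x, 0 < τ x 0 := fun x => h2.trans_le (hl x)
  have dτ : ∀ x, HasDerivAt (fun x => τ x 0) (deriv (fun x => τ x 0) x) x := fun x =>
    ((hτ.differentiable (by simp)) x).hasDerivAt
  have du : ∀ x, HasDerivAt (fun x => u x 0) (deriv (fun x => u x 0) x) x := fun x =>
    ((hu.differentiable (by simp)) x).hasDerivAt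
  have dφ : ∀ x, HasDerivAt (fun x => φ (τ x 0)) (-c (τ x 0) * deriv (fun x => τ x 0) x) x := fun x =>
    (h.dphi _ (pos x)).comp x (dτ x)
  set B := M₁ + c M₂ * M₁ with hB
  have hcM := h.cpos _ h2
  have Bpos : 0 < B := by positivity
  have bφ : ∀ x, |c (τ x 0) * deriv (fun x => τ x 0) x| ≤ c M₂ * M₁ := fun x => by
    rw [abs_mul, abs_of_pos (h.cpos _ (pos x))]
    exact mul_le_mul (h.cAnti h2 (hl x)) (bdt x) (abs_nonneg _) hcM.le
  have sl : ∀ (F F' : ℝ → ℝ), (∀ x, HasDerivAt F (F' x) x) → (∀ x, F' x ≤ B) →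
      ∀ x y, x ≤ y → F y - F x ≤ B * (y - x) := by
    intro F F' hF hF' x y hxy
    exact image_sub_le_mul_sub_of_deriv_le (fun x => (hF x).differentiableAt)
      (fun x => by rw [(hF x).deriv]; exact hF' x) hxy
  have φle : ∀ v w, 0 < v → v ≤ w → φ w ≤ φ v := fun v w hv hvw =>
    h.phiAnti.antitoneOn hv (hv.trans_le hvw) hvw
  obtain ⟨τm, hm, hφm⟩ := h.phitop (((M₁ + φ M₂) - (-M₁ - φ M₂)) / 2 + 1)
  have lower := hs.lower h (S := M₁ + φ M₂) (R := -M₁ - φ M₂) (τm := τm)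
    (fun x => by have := (abs_le.1 (bu x)).2; have := φle _ _ h2 (hl x); linarith)
    (fun x => by have := (abs_le.1 (bu x)).1; have := φle _ _ h2 (hl x); linarith) hm hφm
  have slope := hs.slope h Bpos.le hm lower
    (sl _ _ (fun x => (du x).add (dφ x)) (fun x => by
      have := (abs_le.1 (bdu x)).2; have := (abs_le.1 (bφ x)).1; linarith))
    (sl _ _ (fun x => (du x).sub (dφ x)) (fun x => by
      have := (abs_le.1 (bdu x)).2; have := (abs_le.1 (bφ x)).2; linarith))
  have upper := hs.upper slope
  have bl := fun x e he => hs.blowup h (M := M₁) hm Bpos h1.le lower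
    (fun x t ht => (upper x t ht).trans (by linarith [bt x])) x e he
  have mono : ∀ t, 0 < t → Monotone (fun x => u x t + φ (τ x t)) := by
    intro t ht
    have d : ∀ x, HasDerivAt (fun x => u x t + φ (τ x t)) (Ux x t - c (τ x t) * Tx x t) x := fun x =>
      (line_x (hs.ds h x t ht)).congr_deriv (by simp)
    exact monotone_of_deriv_nonneg (fun x => (d x).differentiableAt)
      (fun x => by rw [(d x).deriv]; exact bl x t ht)
  intro x y hxy
  have cs : ∀ x, Tendsto (fun t => u x t + φ (τ x t)) (nhdsWithin 0 (Ioi 0)) (nhds (u x 0 + φ (τ x 0))) := by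
    intro x
    have h1 := (hs.cu.add (hs.cphi h)).comp (f := fun t : ℝ => (x, t)) (s := Ici 0) (by fun_prop)
      (fun t ht => ⟨trivial, ht⟩)
    exact (h1 0 (by simp)).mono_left (nhdsWithin_mono _ Ioi_subset_Ici_self)
  refine le_of_tendsto_of_tendsto (cs x) (cs y) ?_
  filter_upwards [self_mem_nhdsWithin] with t ht
  exact mono t ht hxy

theorem necessity (h : PData p c c1 φ) {τ₀ u₀ : ℝ → ℝ} {M₁ M₂ : ℝ} (hA : AssumptionA M₁ M₂ τ₀ u₀)
    (hg : GenPSysSol p (Ici 0) 1 τ u) (i1 : ∀ x, τ x 0 = τ₀ x) (i2 : ∀ x, u x 0 = u₀ x) (x : ℝ) :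
    0 ≤ deriv (fun x => u₀ x + φ (τ₀ x)) x ∧ 0 ≤ deriv (fun x => u₀ x - φ (τ₀ x)) x := by
  have hs := Sol.of_gen h hg
  obtain rfl : (fun x => τ x 0) = τ₀ := funext i1
  obtain rfl : (fun x => u x 0) = u₀ := funext i2
  constructor
  · exact (hs.mono_s h hA).deriv_nonneg
  · have hA' : AssumptionA M₁ M₂ (fun x => τ (-x) 0) (fun x => -u (-x) 0) := by
      obtain ⟨hτ, hu, h1, h2, hb, hl⟩ := hA
      refine ⟨hτ.comp contDiff_neg, (hu.comp contDiff_neg).neg, h1, h2, fun x => ?_, fun x => hl _⟩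
      have e1 := deriv_comp_neg (fun x => τ x 0) x
      have e2 := deriv_comp_neg (fun x => u x 0) x
      have e3 : deriv (fun x => -u (-x) 0) x = - deriv (fun x => u (-x) 0) x := deriv.fun_neg
      rw [e3, e1, e2]
      simpa using hb (-x)
    have hm := hs.reflect.mono_s h hA'
    have : Monotone (fun x => u x 0 - φ (τ x 0)) := by
      intro x y hxy
      have := hm (neg_le_neg hxy)
      simp only [neg_neg] at this
      show u x 0 - φ (τ x 0) ≤ u y 0 - φ (τ y 0)
      linarith
    exact this.deriv_nonneg
end


/-- Picard iterates of the Volterra equation. -/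
noncomputable def Wit (a b w : ℝ → ℝ → ℝ) : ℕ → ℝ → ℝ → ℝ
  | 0 => w
  | n + 1 => fun α β => a α β * (∫ x in α..β, Wit a b w n x β)
      + b α β * (∫ y in α..β, Wit a b w n α y)

noncomputable def Vs (a b w : ℝ → ℝ → ℝ) (α β : ℝ) : ℝ := ∑' n, Wit a b w n α β

lemma Wit_congr {a b w a' b' w' : ℝ → ℝ → ℝ} {D : Set (ℝ × ℝ)}
    (ha : ∀ x y, (x, y) ∈ D → a x y = a' x y) (hb : ∀ x y, (x, y) ∈ D → b x y = b' x y)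
    (hw : ∀ x y, (x, y) ∈ D → w x y = w' x y)
    (h1 : ∀ x y, (x, y) ∈ D → ∀ x' ∈ uIcc x y, (x', y) ∈ D)
    (h2 : ∀ x y, (x, y) ∈ D → ∀ y' ∈ uIcc x y, (x, y') ∈ D) (n : ℕ) :
    ∀ x y, (x, y) ∈ D → Wit a b w n x y = Wit a' b' w' n x y := by
  induction n with
  | zero => exact hw
  | succ n ih =>
    intro x y hxy
    simp only [Wit]
    rw [ha x y hxy, hb x y hxy,
      intervalIntegral.integral_congr (fun x' hx' => ih x' y (h1 x y hxy x' hx')),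
      intervalIntegral.integral_congr (fun y' hy' => ih x y' (h2 x y hxy y' hy'))]

lemma Vs_congr {a b w a' b' w' : ℝ → ℝ → ℝ} {D : Set (ℝ × ℝ)}
    (ha : ∀ x y, (x, y) ∈ D → a x y = a' x y) (hb : ∀ x y, (x, y) ∈ D → b x y = b' x y)
    (hw : ∀ x y, (x, y) ∈ D → w x y = w' x y)
    (h1 : ∀ x y, (x, y) ∈ D → ∀ x' ∈ uIcc x y, (x', y) ∈ D)
    (h2 : ∀ x y, (x, y) ∈ D → ∀ y' ∈ uIcc x y, (x, y') ∈ D) :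
    ∀ x y, (x, y) ∈ D → Vs a b w x y = Vs a' b' w' x y := by
  intro x y hxy
  exact tsum_congr fun n => Wit_congr ha hb hw h1 h2 n x y hxy

lemma cont_int1 {f : ℝ → ℝ → ℝ} (hf : Continuous (Function.uncurry f)) :
    Continuous (fun q : ℝ × ℝ => ∫ x in q.1..q.2, f x q.2) := by
  have e : (fun q : ℝ × ℝ => ∫ x in q.1..q.2, f x q.2)
      = fun q : ℝ × ℝ => (∫ x in (0:ℝ)..q.2, f x q.2) - ∫ x in (0:ℝ)..q.1, f x q.2 := by
    funext q
    rw [intervalIntegral.integral_interval_sub_left] <;>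
    · apply Continuous.intervalIntegrable
      exact hf.comp (by fun_prop : Continuous fun x : ℝ => (x, q.2))
  rw [e]
  have h2 : Continuous (Function.uncurry fun (q : ℝ × ℝ) (x : ℝ) => f x q.2) :=
    hf.comp (by fun_prop : Continuous fun z : (ℝ × ℝ) × ℝ => (z.2, z.1.2))
  exact (intervalIntegral.continuous_parametric_intervalIntegral_of_continuous h2 continuous_snd).sub
    (intervalIntegral.continuous_parametric_intervalIntegral_of_continuous h2 continuous_fst)

lemma cont_int2 {f : ℝ → ℝ → ℝ} (hf : Continuous (Function.uncurry f)) :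
    Continuous (fun q : ℝ × ℝ => ∫ y in q.1..q.2, f q.1 y) := by
  have e : (fun q : ℝ × ℝ => ∫ x in q.1..q.2, f q.1 x)
      = fun q : ℝ × ℝ => (∫ x in (0:ℝ)..q.2, f q.1 x) - ∫ x in (0:ℝ)..q.1, f q.1 x := by
    funext q
    rw [intervalIntegral.integral_interval_sub_left] <;>
    · apply Continuous.intervalIntegrable
      exact hf.comp (by fun_prop : Continuous fun x : ℝ => (q.1, x))
  rw [e]
  have h2 : Continuous (Function.uncurry fun (q : ℝ × ℝ) (x : ℝ) => f q.1 x) :=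
    hf.comp (by fun_prop : Continuous fun z : (ℝ × ℝ) × ℝ => (z.1.1, z.2))
  exact (intervalIntegral.continuous_parametric_intervalIntegral_of_continuous h2 continuous_snd).sub
    (intervalIntegral.continuous_parametric_intervalIntegral_of_continuous h2 continuous_fst)

lemma int_pow_bound {f : ℝ → ℝ} {a b K : ℝ} {n : ℕ} (h : ∀ x ∈ uIcc a b, |f x| ≤ K * |x - a| ^ n) :
    |∫ x in a..b, f x| ≤ K * (|b - a| ^ (n + 1) / (n + 1)) := by
  rw [← Real.norm_eq_abs, intervalIntegral.norm_intervalIntegral_eq, ← integral_pow_abs_sub_uIoc,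
    ← integral_const_mul]
  apply MeasureTheory.norm_integral_le_of_norm_le
  · have : Continuous fun x : ℝ => K * |x - a| ^ n := by fun_prop
    exact (this.integrableOn_uIcc (a := a) (b := b)).mono_set uIoc_subset_uIcc
  · rw [ae_restrict_iff' measurableSet_uIoc]
    exact Eventually.of_forall fun x hx => h x (uIoc_subset_uIcc hx)

section
variable {a b w : ℝ → ℝ → ℝ}

lemma Wit_cont (ha : Continuous (Function.uncurry a)) (hb : Continuous (Function.uncurry b))
    (hw : Continuous (Function.uncurry w)) (n : ℕ) :
    Continuous (Function.uncurry (Wit a b w n)) := by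
  induction n with
  | zero => exact hw
  | succ n ih => exact (ha.mul (cont_int1 ih)).add (hb.mul (cont_int2 ih))

lemma Wit_bound {L A C : ℝ} (hA : 0 ≤ A)
    (ha : ∀ x ∈ Icc (-L) L, ∀ y ∈ Icc (-L) L, |a x y| ≤ A)
    (hb : ∀ x ∈ Icc (-L) L, ∀ y ∈ Icc (-L) L, |b x y| ≤ A)
    (hw : ∀ x ∈ Icc (-L) L, ∀ y ∈ Icc (-L) L, |w x y| ≤ C) (n : ℕ) :
    ∀ x ∈ Icc (-L) L, ∀ y ∈ Icc (-L) L,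
      |Wit a b w n x y| ≤ C * ((2 * A) ^ n / n.factorial) * |y - x| ^ n := by
  induction n with
  | zero => intro x hx y hy; simpa [Wit] using hw x hx y hy
  | succ n ih =>
    intro x hx y hy
    have hC : 0 ≤ C := (abs_nonneg _).trans (hw x hx y hy)
    have sub : uIcc x y ⊆ Icc (-L) L := uIcc_subset_Icc hx hy
    have i1 : |∫ x' in x..y, Wit a b w n x' y| ≤ C * ((2 * A) ^ n / n.factorial)
        * (|y - x| ^ (n + 1) / (n + 1)) := by
      rw [intervalIntegral.integral_symm, abs_neg, abs_sub_comm y x]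
      apply int_pow_bound
      intro x' hx'
      rw [abs_sub_comm x' y]
      exact ih x' (sub (by rwa [uIcc_comm])) y hy
    have i2 : |∫ y' in x..y, Wit a b w n x y'| ≤ C * ((2 * A) ^ n / n.factorial)
        * (|y - x| ^ (n + 1) / (n + 1)) := by
      apply int_pow_bound
      intro y' hy'
      exact ih x hx y' (sub hy')
    simp only [Wit]
    refine (abs_add_le _ _).trans ?_
    rw [abs_mul, abs_mul]
    have j1 := mul_le_mul (ha x hx y hy) i1 (abs_nonneg _) hA
    have j2 := mul_le_mul (hb x hx y hy) i2 (abs_nonneg _) hA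
    refine (add_le_add j1 j2).trans (le_of_eq ?_)
    rw [Nat.factorial_succ]
    push_cast
    have : (n.factorial : ℝ) ≠ 0 := by positivity
    field_simp
    ring

lemma Wit_dom (ha : Continuous (Function.uncurry a)) (hb : Continuous (Function.uncurry b))
    (hw : Continuous (Function.uncurry w)) (L : ℝ) :
    ∃ v : ℕ → ℝ, Summable v ∧ ∀ n, ∀ x ∈ Icc (-L) L, ∀ y ∈ Icc (-L) L, |Wit a b w n x y| ≤ v n := by
  have hK : IsCompact (Icc (-L) L ×ˢ Icc (-L) L) := isCompact_Icc.prod isCompact_Icc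
  obtain ⟨A1, h1⟩ := hK.exists_bound_of_continuousOn ha.continuousOn
  obtain ⟨A2, h2⟩ := hK.exists_bound_of_continuousOn hb.continuousOn
  obtain ⟨C, h3⟩ := hK.exists_bound_of_continuousOn hw.continuousOn
  set A := max 0 (max A1 A2)
  have hA : 0 ≤ A := le_max_left _ _
  have hA1 : A1 ≤ A := (le_max_left _ _).trans (le_max_right _ _)
  have hA2 : A2 ≤ A := (le_max_right _ _).trans (le_max_right _ _)
  refine ⟨fun n => |C| * ((2 * A * (2 * L)) ^ n / n.factorial),
    (Real.summable_pow_div_factorial _).mul_left _, ?_⟩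
  intro n x hx y hy
  have hb := Wit_bound hA (fun x hx y hy => (h1 (x, y) ⟨hx, hy⟩).trans hA1)
    (fun x hx y hy => (h2 (x, y) ⟨hx, hy⟩).trans hA2) (fun x hx y hy => (h3 (x, y) ⟨hx, hy⟩)) n x hx y hy
  refine hb.trans ?_
  have e1 : |y - x| ≤ 2 * L := abs_le.2 ⟨by linarith [hx.2, hy.1], by linarith [hx.1, hy.2]⟩
  beta_reduce
  rw [mul_pow (2 * A), mul_assoc, div_mul_eq_mul_div]
  gcongr
  exact le_abs_self C

lemma Vs_spec (ha : Continuous (Function.uncurry a)) (hb : Continuous (Function.uncurry b))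
    (hw : Continuous (Function.uncurry w)) :
    Continuous (Function.uncurry (Vs a b w)) ∧ ∀ x y, Vs a b w x y = w x y
      + (a x y * (∫ x' in x..y, Vs a b w x' y) + b x y * (∫ y' in x..y, Vs a b w x y')) := by
  have hc := Wit_cont ha hb hw
  refine ⟨?_, ?_⟩
  · rw [continuous_iff_continuousAt]
    intro q
    set L := max |q.1| |q.2| + 1
    obtain ⟨v, hv, hv'⟩ := Wit_dom ha hb hw L
    have : ContinuousOn (fun q : ℝ × ℝ => ∑' n, Wit a b w n q.1 q.2) (Icc (-L) L ×ˢ Icc (-L) L) :=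
      continuousOn_tsum (fun n => (hc n).continuousOn) hv (fun n x hx => hv' n _ hx.1 _ hx.2)
    refine this.continuousAt ?_
    have l1 : |q.1| < L := (le_max_left _ _).trans_lt (lt_add_one _)
    have l2 : |q.2| < L := (le_max_right _ _).trans_lt (lt_add_one _)
    rw [abs_lt] at l1 l2
    exact prod_mem_nhds (Icc_mem_nhds l1.1 l1.2) (Icc_mem_nhds l2.1 l2.2)
  · intro x y
    set L := max |x| |y|
    obtain ⟨v, hv, hv'⟩ := Wit_dom ha hb hw L
    have hx : x ∈ Icc (-L) L := abs_le.1 (le_max_left _ _)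
    have hy : y ∈ Icc (-L) L := abs_le.1 (le_max_right _ _)
    have sub : uIcc x y ⊆ Icc (-L) L := uIcc_subset_Icc hx hy
    have sm : ∀ x ∈ Icc (-L) L, ∀ y ∈ Icc (-L) L, Summable fun n => Wit a b w n x y :=
      fun x hx y hy => Summable.of_norm_bounded hv (fun n => hv' n x hx y hy)
    have key : ∀ (F : ℕ → ℝ → ℝ) (f : ℝ → ℝ), (∀ n, Continuous (F n)) →
        (∀ n, ∀ x' ∈ uIcc x y, |F n x'| ≤ v n) → (∀ x' ∈ uIcc x y, HasSum (fun n => F n x') (f x')) →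
        HasSum (fun n => ∫ x' in x..y, F n x') (∫ x' in x..y, f x') := by
      intro F f h1 h2 h3
      apply intervalIntegral.hasSum_integral_of_dominated_convergence (fun n _ => v n)
      · exact fun n => (h1 n).aestronglyMeasurable
      · exact fun n => Eventually.of_forall fun x' hx' => h2 n x' (uIoc_subset_uIcc hx')
      · exact Eventually.of_forall fun x' hx' => hv
      · exact intervalIntegrable_const
      · exact Eventually.of_forall fun x' hx' => h3 x' (uIoc_subset_uIcc hx')
    have k1 := key (fun n x' => Wit a b w n x' y) (fun x' => Vs a b w x' y)
      (fun n => (hc n).comp (by fun_prop : Continuous fun x' : ℝ => (x', y)))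
      (fun n x' hx' => hv' n x' (sub hx') y hy) (fun x' hx' => (sm x' (sub hx') y hy).hasSum)
    have k2 := key (fun n y' => Wit a b w n x y') (fun y' => Vs a b w x y')
      (fun n => (hc n).comp (by fun_prop : Continuous fun y' : ℝ => (x, y')))
      (fun n y' hy' => hv' n x hx y' (sub hy')) (fun y' hy' => (sm x hx y' (sub hy')).hasSum)
    have k3 := (k1.mul_left (a x y)).add (k2.mul_left (b x y))
    have : Vs a b w x y = Wit a b w 0 x y + ∑' n, Wit a b w (n + 1) x y :=
      (sm x hx y hy).tsum_eq_zero_add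
    rw [this, ← k3.tsum_eq]
    rfl

lemma Wit_nonneg {D : Set (ℝ × ℝ)}
    (ha : ∀ x y, (x, y) ∈ D → 0 ≤ a x y) (hb : ∀ x y, (x, y) ∈ D → 0 ≤ b x y)
    (hw : ∀ x y, (x, y) ∈ D → 0 ≤ w x y)
    (h1 : ∀ x y, (x, y) ∈ D → x ≤ y → ∀ x' ∈ Icc x y, (x', y) ∈ D)
    (h2 : ∀ x y, (x, y) ∈ D → x ≤ y → ∀ y' ∈ Icc x y, (x, y') ∈ D) (n : ℕ) :
    ∀ x y, (x, y) ∈ D → x ≤ y → 0 ≤ Wit a b w n x y := by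
  induction n with
  | zero => exact fun x y h _ => hw x y h
  | succ n ih =>
    intro x y h hxy
    simp only [Wit]
    refine add_nonneg (mul_nonneg (ha x y h) ?_) (mul_nonneg (hb x y h) ?_)
    · exact intervalIntegral.integral_nonneg hxy (fun x' hx' => ih x' y (h1 x y h hxy x' hx') hx'.2)
    · exact intervalIntegral.integral_nonneg hxy (fun y' hy' => ih x y' (h2 x y h hxy y' hy') hy'.1)

lemma Vs_nonneg {D : Set (ℝ × ℝ)}
    (ha : ∀ x y, (x, y) ∈ D → 0 ≤ a x y) (hb : ∀ x y, (x, y) ∈ D → 0 ≤ b x y)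
    (hw : ∀ x y, (x, y) ∈ D → 0 ≤ w x y)
    (h1 : ∀ x y, (x, y) ∈ D → x ≤ y → ∀ x' ∈ Icc x y, (x', y) ∈ D)
    (h2 : ∀ x y, (x, y) ∈ D → x ≤ y → ∀ y' ∈ Icc x y, (x, y') ∈ D) :
    ∀ x y, (x, y) ∈ D → x ≤ y → 0 ≤ Vs a b w x y := fun x y h hxy =>
  tsum_nonneg fun n => Wit_nonneg ha hb hw h1 h2 n x y h hxy
end


section
variable {Ω : Set (ℝ × ℝ)} {A Bf W : ℝ → ℝ → ℝ} {y0 : ℝ → ℝ}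

lemma slice2 (cA : ContinuousOn (Function.uncurry A) Ω) (x : ℝ) :
    ContinuousOn (fun y => A x y) {y | (x, y) ∈ Ω} :=
  cA.comp (f := fun y : ℝ => (x, y)) (by fun_prop) (fun y hy => hy)

lemma slice1 (cA : ContinuousOn (Function.uncurry A) Ω) (y : ℝ) :
    ContinuousOn (fun x => A x y) {x | (x, y) ∈ Ω} :=
  cA.comp (f := fun x : ℝ => (x, y)) (by fun_prop) (fun y hy => hy)

lemma open2 (hΩ : IsOpen Ω) (x : ℝ) : IsOpen {y | (x, y) ∈ Ω} :=
  hΩ.preimage (by fun_prop : Continuous fun y : ℝ => (x, y))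

lemma open1 (hΩ : IsOpen Ω) (y : ℝ) : IsOpen {x | (x, y) ∈ Ω} :=
  hΩ.preimage (by fun_prop : Continuous fun x : ℝ => (x, y))

/-- derivative in the upper limit -/
lemma ftc_right {f : ℝ → ℝ} {U : Set ℝ} (hU : IsOpen U) (hf : ContinuousOn f U) {a b : ℝ}
    (hab : uIcc a b ⊆ U) : HasDerivAt (fun y => ∫ t in a..y, f t) (f b) b :=
  intervalIntegral.integral_hasDerivAt_right ((hf.mono hab).intervalIntegrable)
    (hf.stronglyMeasurableAtFilter hU b (hab right_mem_uIcc)) (hf.continuousAt (hU.mem_nhds (hab right_mem_uIcc)))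

lemma ftc_left {f : ℝ → ℝ} {U : Set ℝ} (hU : IsOpen U) (hf : ContinuousOn f U) {a b : ℝ}
    (hab : uIcc a b ⊆ U) : HasDerivAt (fun y => ∫ t in y..b, f t) (-f a) a :=
  intervalIntegral.integral_hasDerivAt_left ((hf.mono hab).intervalIntegrable)
    (hf.stronglyMeasurableAtFilter hU a (hab left_mem_uIcc)) (hf.continuousAt (hU.mem_nhds (hab left_mem_uIcc)))

lemma poincare2 (hΩ : IsOpen Ω)
    (seg : ∀ x y, (x, y) ∈ Ω → ∀ y' ∈ uIcc x y, (x, y') ∈ Ω)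
    (cA : ContinuousOn (Function.uncurry A) Ω) (x y : ℝ) (hxy : (x, y) ∈ Ω) :
    HasDerivAt (fun y => y0 x + ∫ y' in x..y, A x y') (A x y) y :=
  (ftc_right (open2 hΩ x) (slice2 cA x) (fun y' hy' => seg x y hxy y' hy')).const_add _

lemma poincare1 (hΩ : IsOpen Ω) (diag : ∀ x, (x, x) ∈ Ω)
    (seg : ∀ x y, (x, y) ∈ Ω → ∀ y' ∈ uIcc x y, (x, y') ∈ Ω)
    (cA : ContinuousOn (Function.uncurry A) Ω)
    (cW : ContinuousOn (Function.uncurry W) Ω)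
    (dA : ∀ x y, (x, y) ∈ Ω → HasDerivAt (fun x => A x y) (W x y) x)
    (dB : ∀ x y, (x, y) ∈ Ω → HasDerivAt (fun y => Bf x y) (W x y) y)
    (dy0 : ∀ x, HasDerivAt y0 (A x x + Bf x x) x) (x0 y : ℝ) (hxy : (x0, y) ∈ Ω) :
    HasDerivAt (fun x => y0 x + ∫ y' in x..y, A x y') (Bf x0 y) x0 := by
  obtain ⟨U, V, hU, hV, hxU, hyV, hUV⟩ := generalized_tube_lemma (s := {x0}) (t := uIcc x0 y)
    isCompact_singleton isCompact_uIcc hΩ (by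
      rintro ⟨a, b⟩ ⟨ha, hb⟩
      obtain rfl : a = x0 := ha
      exact seg _ _ hxy b hb)
  have hx0 : x0 ∈ U ∩ V := ⟨hxU rfl, hyV left_mem_uIcc⟩
  obtain ⟨ρ, hρ, hball⟩ := Metric.nhds_basis_closedBall.mem_iff.1 ((hU.inter hV).mem_nhds hx0)
  have hK : IsCompact (Metric.closedBall x0 ρ ×ˢ uIcc x0 y) :=
    (isCompact_closedBall _ _).prod isCompact_uIcc
  have hKΩ : Metric.closedBall x0 ρ ×ˢ uIcc x0 y ⊆ Ω := fun q hq =>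
    hUV ⟨(hball hq.1).1, hyV hq.2⟩
  obtain ⟨C, hC⟩ := hK.exists_bound_of_continuousOn (cW.mono hKΩ)
  have hb : Metric.closedBall x0 ρ ∈ nhds x0 := Metric.closedBall_mem_nhds _ hρ
  have cAx : ∀ x ∈ Metric.closedBall x0 ρ, ContinuousOn (fun y' => A x y') (uIcc x0 y) :=
    fun x hx => (slice2 cA x).mono (fun y' hy' => hKΩ ⟨hx, hy'⟩)
  have D1 : HasDerivAt (fun x => ∫ y' in x0..y, A x y') (∫ y' in x0..y, W x0 y') x0 := by
    refine (intervalIntegral.hasDerivAt_integral_of_dominated_loc_of_deriv_le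
      (F := A) (F' := W) (bound := fun _ => C) hb ?_ ?_ ?_ ?_ ?_ ?_).2
    · filter_upwards [hb] with x hx
      exact ((cAx x hx).mono uIoc_subset_uIcc).aestronglyMeasurable measurableSet_uIoc
    · exact (cAx x0 (Metric.mem_closedBall_self hρ.le)).intervalIntegrable
    · exact ((slice2 cW x0).mono (fun y' hy' => hKΩ ⟨Metric.mem_closedBall_self hρ.le,
        uIoc_subset_uIcc hy'⟩)).aestronglyMeasurable measurableSet_uIoc
    · exact Eventually.of_forall fun y' hy' x hx => hC (x, y') ⟨hx, uIoc_subset_uIcc hy'⟩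
    · exact intervalIntegrable_const
    · exact Eventually.of_forall fun y' hy' x hx => dA x y' (hKΩ ⟨hx, uIoc_subset_uIcc hy'⟩)
  have e1 : ∫ y' in x0..y, W x0 y' = Bf x0 y - Bf x0 x0 := by
    apply intervalIntegral.integral_eq_sub_of_hasDerivAt
    · exact fun y' hy' => dB x0 y' (seg _ _ hxy y' hy')
    · exact ((slice2 cW x0).mono (fun y' hy' => seg _ _ hxy y' hy')).intervalIntegrable
  have hball2 : ∀ x ∈ Metric.closedBall x0 ρ, ∀ y' ∈ uIcc x0 x, (x, y') ∈ Ω := by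
    intro x hx y' hy'
    refine hUV ⟨(hball hx).1, (hball ?_).2⟩
    rw [Real.closedBall_eq_Icc] at hx ⊢
    exact uIcc_subset_Icc (by constructor <;> linarith) hx hy'
  have D2 : HasDerivAt (fun x => ∫ y' in x0..x, A x y') (A x0 x0) x0 := by
    rw [hasDerivAt_iff_isLittleO, Asymptotics.isLittleO_iff]
    intro ε hε
    have hca : ContinuousAt (Function.uncurry A) (x0, x0) := cA.continuousAt (hΩ.mem_nhds (diag x0))
    obtain ⟨δ, hδ, hh⟩ := Metric.continuousAt_iff.1 hca ε hε
    filter_upwards [hb, Metric.ball_mem_nhds x0 hδ] with x hx hxδ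
    have hi : IntervalIntegrable (fun y' => A x y') volume x0 x :=
      ((slice2 cA x).mono (fun y' hy' => hball2 x hx y' hy')).intervalIntegrable
    have e2 : (∫ y' in x0..x, A x y') - (∫ y' in x0..x0, A x0 y') - (x - x0) • A x0 x0
        = ∫ y' in x0..x, (A x y' - A x0 x0) := by
      rw [intervalIntegral.integral_sub hi intervalIntegrable_const]
      simp
    rw [e2]
    apply intervalIntegral.norm_integral_le_of_norm_le_const
    intro y' hy'
    have hy2 : dist y' x0 < δ := by
      have h1 : y' ∈ uIcc x0 x := uIoc_subset_uIcc hy'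
      have h2 : |y' - x0| ≤ |x - x0| := abs_sub_left_of_mem_uIcc h1
      rw [Real.dist_eq]
      exact h2.trans_lt (by simpa [Real.dist_eq] using hxδ)
    have := hh (x := (x, y')) (by rw [Prod.dist_eq]; exact max_lt hxδ hy2)
    rw [Real.dist_eq] at this
    exact this.le
  have D3 := (dy0 x0).add (D1.sub D2)
  rw [e1] at D3
  refine (D3.congr_deriv (by ring)).congr_of_eventuallyEq ?_
  filter_upwards [hb] with x hx
  have hi : IntervalIntegrable (fun y' => A x y') volume x0 x :=
    ((slice2 cA x).mono (fun y' hy' => hball2 x hx y' hy')).intervalIntegrable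
  have := intervalIntegral.integral_interval_sub_left ((cAx x hx).intervalIntegrable) hi
  simp only [Pi.add_apply, Pi.sub_apply]
  rw [this]

lemma strict_of_partials (hΩ : IsOpen Ω) {Y : ℝ → ℝ → ℝ}
    (cA : ContinuousOn (Function.uncurry A) Ω) (cB : ContinuousOn (Function.uncurry Bf) Ω)
    (d1 : ∀ x y, (x, y) ∈ Ω → HasDerivAt (fun x => Y x y) (Bf x y) x)
    (d2 : ∀ x y, (x, y) ∈ Ω → HasDerivAt (fun y => Y x y) (A x y) y) (x y : ℝ) (h : (x, y) ∈ Ω) :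
    HasStrictFDerivAt (fun q : ℝ × ℝ => Y q.1 q.2)
      (Bf x y • ContinuousLinearMap.fst ℝ ℝ ℝ + A x y • ContinuousLinearMap.snd ℝ ℝ ℝ) (x, y) := by
  have hn := hΩ.mem_nhds h
  have := hasStrictFDerivAt_uncurry_coprod (𝕜 := ℝ) (u := (x, y)) (f := Y)
    (f₁ := fun x y => ContinuousLinearMap.toSpanSingleton ℝ (Bf x y))
    (f₂ := fun x y => ContinuousLinearMap.toSpanSingleton ℝ (A x y))
    (by filter_upwards [hn] with v hv; exact (d1 v.1 v.2 hv).hasFDerivAt)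
    (by filter_upwards [hn] with v hv; exact (d2 v.1 v.2 hv).hasFDerivAt)
    ((ContinuousLinearMap.toSpanSingletonCLE (𝕜 := ℝ) (E := ℝ)).continuous.continuousAt.comp
      (cB.continuousAt hn))
    ((ContinuousLinearMap.toSpanSingletonCLE (𝕜 := ℝ) (E := ℝ)).continuous.continuousAt.comp
      (cA.continuousAt hn))
  refine this.congr_fderiv ?_
  ext <;> simp [Function.HasUncurry.uncurry]
end


structure HD (R : Set ℝ) (C C1 Φ s0 s1 r0 r1 : ℝ → ℝ) (B cm : ℝ) : Prop where
  Ropen : IsOpen R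
  Rup : ∀ z w, z ∈ R → z ≤ w → w ∈ R
  Cpos : ∀ z ∈ R, 0 < C z
  dC : ∀ z ∈ R, HasDerivAt C (C1 z) z
  C1pos : ∀ z ∈ R, 0 ≤ C1 z
  C1cont : ContinuousOn C1 R
  dΦ : ∀ z ∈ R, HasDerivAt Φ (-(1 / C z)) z
  ds : ∀ x, HasDerivAt s0 (s1 x) x
  dr : ∀ x, HasDerivAt r0 (r1 x) x
  cs : Continuous s1
  cr : Continuous r1
  s1pos : ∀ x, 0 ≤ s1 x
  r1pos : ∀ x, 0 ≤ r1 x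
  s1le : ∀ x, s1 x ≤ B / 2
  r1le : ∀ x, r1 x ≤ B / 2
  Bpos : 0 < B
  diag : ∃ m0 ∈ R, ∀ x, m0 ≤ (s0 x - r0 x) / 2
  cmax : ∀ x, C ((s0 x - r0 x) / 2) ≤ cm

noncomputable def Zf (s0 r0 : ℝ → ℝ) (x y : ℝ) : ℝ := (s0 x - r0 y) / 2

def Om (R : Set ℝ) (s0 r0 : ℝ → ℝ) : Set (ℝ × ℝ) := {q | Zf s0 r0 q.1 q.2 ∈ R}

namespace HD
variable {R : Set ℝ} {C C1 Φ s0 s1 r0 r1 : ℝ → ℝ} {B cm : ℝ}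

lemma smono (h : HD R C C1 Φ s0 s1 r0 r1 B cm) : Monotone s0 :=
  monotone_of_deriv_nonneg (fun x => (h.ds x).differentiableAt)
    (fun x => by rw [(h.ds x).deriv]; exact h.s1pos x)

lemma rmono (h : HD R C C1 Φ s0 s1 r0 r1 B cm) : Monotone r0 :=
  monotone_of_deriv_nonneg (fun x => (h.dr x).differentiableAt)
    (fun x => by rw [(h.dr x).deriv]; exact h.r1pos x)

lemma scont (h : HD R C C1 Φ s0 s1 r0 r1 B cm) : Continuous s0 :=
  continuous_iff_continuousAt.2 fun x => (h.ds x).continuousAt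

lemma rcont (h : HD R C C1 Φ s0 s1 r0 r1 B cm) : Continuous r0 :=
  continuous_iff_continuousAt.2 fun x => (h.dr x).continuousAt

lemma Zle (h : HD R C C1 Φ s0 s1 r0 r1 B cm) {x x' y y' : ℝ} (hx : x ≤ x') (hy : y' ≤ y) :
    Zf s0 r0 x y ≤ Zf s0 r0 x' y' := by
  unfold Zf
  have := h.smono hx
  have := h.rmono hy
  linarith

lemma Zcont (h : HD R C C1 Φ s0 s1 r0 r1 B cm) : Continuous (fun q : ℝ × ℝ => Zf s0 r0 q.1 q.2) := by
  unfold Zf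
  have := h.scont
  have := h.rcont
  fun_prop

lemma Zdx (h : HD R C C1 Φ s0 s1 r0 r1 B cm) (x y : ℝ) :
    HasDerivAt (fun x => Zf s0 r0 x y) (s1 x / 2) x :=
  ((h.ds x).sub_const _).div_const 2

lemma Zdy (h : HD R C C1 Φ s0 s1 r0 r1 B cm) (x y : ℝ) :
    HasDerivAt (fun y => Zf s0 r0 x y) (-(r1 y / 2)) y :=
  (((h.dr y).const_sub _).div_const 2).congr_deriv (by ring)

lemma Zmin1 (h : HD R C C1 Φ s0 s1 r0 r1 B cm) {x y x' : ℝ} (hx : x' ∈ uIcc x y) :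
    min (Zf s0 r0 x y) (Zf s0 r0 y y) ≤ Zf s0 r0 x' y := by
  rcases le_total x y with h1 | h1
  · rw [uIcc_of_le h1] at hx
    exact (min_le_left _ _).trans (h.Zle hx.1 le_rfl)
  · rw [uIcc_of_ge h1] at hx
    exact (min_le_right _ _).trans (h.Zle hx.1 le_rfl)

lemma Zmin2 (h : HD R C C1 Φ s0 s1 r0 r1 B cm) {x y y' : ℝ} (hy : y' ∈ uIcc x y) :
    min (Zf s0 r0 x y) (Zf s0 r0 x x) ≤ Zf s0 r0 x y' := by
  rcases le_total x y with h1 | h1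
  · rw [uIcc_of_le h1] at hy
    exact (min_le_left _ _).trans (h.Zle le_rfl hy.2)
  · rw [uIcc_of_ge h1] at hy
    exact (min_le_right _ _).trans (h.Zle le_rfl hy.2)

lemma diagR (h : HD R C C1 Φ s0 s1 r0 r1 B cm) (x : ℝ) : Zf s0 r0 x x ∈ R := by
  obtain ⟨m0, hm, hm'⟩ := h.diag
  exact h.Rup _ _ hm (hm' x)

lemma Omopen (h : HD R C C1 Φ s0 s1 r0 r1 B cm) : IsOpen (Om R s0 r0) := h.Ropen.preimage h.Zcont

lemma minR {x y : ℝ} (hx : x ∈ R) (hy : y ∈ R) : min x y ∈ R := by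
  rcases min_choice x y with e | e <;> rw [e] <;> assumption

lemma seg1 (h : HD R C C1 Φ s0 s1 r0 r1 B cm) (x y : ℝ) (hxy : (x, y) ∈ Om R s0 r0) :
    ∀ x' ∈ uIcc x y, (x', y) ∈ Om R s0 r0 := fun x' hx' =>
  h.Rup _ _ (minR hxy (h.diagR y)) (h.Zmin1 hx')

lemma seg2 (h : HD R C C1 Φ s0 s1 r0 r1 B cm) (x y : ℝ) (hxy : (x, y) ∈ Om R s0 r0) :
    ∀ y' ∈ uIcc x y, (x, y') ∈ Om R s0 r0 := fun y' hy' =>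
  h.Rup _ _ (minR hxy (h.diagR x)) (h.Zmin2 hy')

lemma Ccont (h : HD R C C1 Φ s0 s1 r0 r1 B cm) : ContinuousOn C R := fun z hz =>
  (h.dC z hz).continuousAt.continuousWithinAt

lemma Cmono (h : HD R C C1 Φ s0 s1 r0 r1 B cm) {z w : ℝ} (hz : z ∈ R) (hzw : z ≤ w) : C z ≤ C w := by
  have hsub : Icc z w ⊆ R := fun x hx => h.Rup z x hz hx.1
  have : MonotoneOn C (Icc z w) := by
    apply monotoneOn_of_deriv_nonneg (convex_Icc z w) (h.Ccont.mono hsub)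
    · intro x hx
      exact (h.dC x (hsub (interior_subset hx))).differentiableAt.differentiableWithinAt
    · intro x hx
      rw [(h.dC x (hsub (interior_subset hx))).deriv]
      exact h.C1pos x (hsub (interior_subset hx))
  exact this (left_mem_Icc.2 hzw) (right_mem_Icc.2 hzw) hzw

/-- the Volterra solution -/
theorem exV (h : HD R C C1 Φ s0 s1 r0 r1 B cm) (gP gQ : ℝ → ℝ) (cgP : Continuous gP)
    (cgQ : Continuous gQ) (gP0 : ∀ x, 0 ≤ gP x) (gQ0 : ∀ x, 0 ≤ gQ x) :
    ∃ V : ℝ → ℝ → ℝ, ContinuousOn (Function.uncurry V) (Om R s0 r0) ∧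
      (∀ x y, (x, y) ∈ Om R s0 r0 → V x y =
        (C1 (Zf s0 r0 x y) / (4 * C (Zf s0 r0 x y)) * s1 x) * (gP y + ∫ x' in x..y, V x' y)
        + (C1 (Zf s0 r0 x y) / (4 * C (Zf s0 r0 x y)) * r1 y) * (gQ x + ∫ y' in x..y, V x y')) ∧
      (∀ x y, (x, y) ∈ Om R s0 r0 → x ≤ y → 0 ≤ V x y) ∧
      ContinuousOn (fun q : ℝ × ℝ => ∫ x' in q.1..q.2, V x' q.2) (Om R s0 r0) ∧
      ContinuousOn (fun q : ℝ × ℝ => ∫ y' in q.1..q.2, V q.1 y') (Om R s0 r0) := by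
  set κ : ℝ → ℝ := fun z => C1 z / (4 * C z) with hκ
  have κcont : ContinuousOn κ R := h.C1cont.div (continuousOn_const.mul h.Ccont)
    (fun z hz => by have := h.Cpos z hz; positivity)
  have κ0 : ∀ z ∈ R, 0 ≤ κ z := fun z hz => by
    have := h.Cpos z hz; have := h.C1pos z hz; positivity
  set a : ℝ → ℝ → ℝ := fun x y => κ (Zf s0 r0 x y) * s1 x with ha
  set b : ℝ → ℝ → ℝ := fun x y => κ (Zf s0 r0 x y) * r1 y with hb
  set w : ℝ → ℝ → ℝ := fun x y => a x y * gP y + b x y * gQ x with hw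
  have loc : ∀ q ∈ Om R s0 r0, ∃ (D : Set (ℝ × ℝ)) (V' : ℝ → ℝ → ℝ), D ∈ nhds q ∧
      Continuous (Function.uncurry V') ∧ (∀ x y, (x, y) ∈ D → Vs a b w x y = V' x y) ∧
      (∀ x y, (x, y) ∈ D → V' x y = w x y
      + (a x y * (∫ x' in x..y, V' x' y) + b x y * (∫ y' in x..y, V' x y'))) ∧
      (∀ x y, (x, y) ∈ D → ∀ x' ∈ uIcc x y, (x', y) ∈ D) ∧
      (∀ x y, (x, y) ∈ D → ∀ y' ∈ uIcc x y, (x, y') ∈ D) := by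
    intro q hq
    obtain ⟨m0, hm0, hd⟩ := h.diag
    obtain ⟨ε, hε, hball⟩ := Metric.isOpen_iff.1 h.Ropen _ hq
    set m := min (Zf s0 r0 q.1 q.2 - ε / 2) m0 with hm
    have hmR : m ∈ R := minR (hball (by
      rw [Metric.mem_ball, Real.dist_eq, abs_lt]; constructor <;> linarith)) hm0
    have hmd : ∀ x, m ≤ Zf s0 r0 x x := fun x => (min_le_right _ _).trans (hd x)
    set κm : ℝ → ℝ → ℝ := fun x y => κ (max (Zf s0 r0 x y) m) with hκm
    have κmc : Continuous (Function.uncurry κm) :=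
      κcont.comp_continuous (h.Zcont.max continuous_const) (fun x => h.Rup _ _ hmR (le_max_right _ _))
    set a' : ℝ → ℝ → ℝ := fun x y => κm x y * s1 x with ha'
    set b' : ℝ → ℝ → ℝ := fun x y => κm x y * r1 y with hb'
    set w' : ℝ → ℝ → ℝ := fun x y => a' x y * gP y + b' x y * gQ x with hw'
    have ca : Continuous (Function.uncurry a') := κmc.mul (h.cs.comp continuous_fst)
    have cb : Continuous (Function.uncurry b') := κmc.mul (h.cr.comp continuous_snd)
    have cw : Continuous (Function.uncurry w') :=
      (ca.mul (cgP.comp continuous_snd)).add (cb.mul (cgQ.comp continuous_fst))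
    set D : Set (ℝ × ℝ) := {q | m ≤ Zf s0 r0 q.1 q.2} with hD
    have ea : ∀ x y, (x, y) ∈ D → a x y = a' x y := fun x y hxy => by
      have : max (Zf s0 r0 x y) m = Zf s0 r0 x y := max_eq_left hxy
      simp only [ha, ha', hκm, this]
    have eb : ∀ x y, (x, y) ∈ D → b x y = b' x y := fun x y hxy => by
      have : max (Zf s0 r0 x y) m = Zf s0 r0 x y := max_eq_left hxy
      simp only [hb, hb', hκm, this]
    have ew : ∀ x y, (x, y) ∈ D → w x y = w' x y := fun x y hxy => by
      simp only [hw, hw', ea x y hxy, eb x y hxy]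
    have g1 : ∀ x y, (x, y) ∈ D → ∀ x' ∈ uIcc x y, (x', y) ∈ D := fun x y hxy x' hx' =>
      (le_min hxy (hmd y)).trans (h.Zmin1 hx')
    have g2 : ∀ x y, (x, y) ∈ D → ∀ y' ∈ uIcc x y, (x, y') ∈ D := fun x y hxy y' hy' =>
      (le_min hxy (hmd x)).trans (h.Zmin2 hy')
    obtain ⟨s1, s2⟩ := Vs_spec ca cb cw
    refine ⟨D, Vs a' b' w', ?_, s1, Vs_congr ea eb ew g1 g2, ?_, g1, g2⟩
    · have : ∀ᶠ q' in nhds q, m < Zf s0 r0 q'.1 q'.2 :=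
        h.Zcont.continuousAt.eventually (lt_mem_nhds ((min_le_left _ _).trans_lt (by linarith)))
      filter_upwards [this] with q' hq'
      exact hq'.le
    · intro x y hxy
      rw [ea x y hxy, eb x y hxy, ew x y hxy]
      exact s2 x y
  refine ⟨Vs a b w, ?_, ?_, ?_, ?_, ?_⟩
  · intro q hq
    obtain ⟨D, V', hD, cV, e, -⟩ := loc q hq
    apply ContinuousAt.continuousWithinAt
    refine cV.continuousAt.congr ?_
    filter_upwards [hD] with q' hq'
    exact (e q'.1 q'.2 hq').symm
  · intro x y hxy
    obtain ⟨D, V', hD, cV, e, eq, g1, g2⟩ := loc (x, y) hxy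
    have hm := mem_of_mem_nhds hD
    rw [e x y hm, eq x y hm, 
      intervalIntegral.integral_congr (fun x' hx' => e x' y (g1 x y hm x' hx')),
      intervalIntegral.integral_congr (fun y' hy' => e x y' (g2 x y hm y' hy'))]
    simp only [hw, ha, hb, hκ]
    ring
  · apply Vs_nonneg
    · exact fun x y hxy => mul_nonneg (κ0 _ hxy) (h.s1pos x)
    · exact fun x y hxy => mul_nonneg (κ0 _ hxy) (h.r1pos y)
    · exact fun x y hxy => add_nonneg (mul_nonneg (mul_nonneg (κ0 _ hxy) (h.s1pos x)) (gP0 y))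
        (mul_nonneg (mul_nonneg (κ0 _ hxy) (h.r1pos y)) (gQ0 x))
    · exact fun x y hxy hle x' hx' => h.seg1 x y hxy x' (Icc_subset_uIcc hx')
    · exact fun x y hxy hle x' hx' => h.seg2 x y hxy x' (Icc_subset_uIcc hx')
  · intro q hq
    obtain ⟨D, V', hD, cV, e, eq, g1, g2⟩ := loc q hq
    apply ContinuousAt.continuousWithinAt
    refine (cont_int1 cV).continuousAt.congr ?_
    filter_upwards [hD] with q' hq'
    exact (intervalIntegral.integral_congr (fun x' hx' => e x' q'.2 (g1 q'.1 q'.2 hq' x' hx'))).symm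
  · intro q hq
    obtain ⟨D, V', hD, cV, e, eq, g1, g2⟩ := loc q hq
    apply ContinuousAt.continuousWithinAt
    refine (cont_int2 cV).continuousAt.congr ?_
    filter_upwards [hD] with q' hq'
    exact (intervalIntegral.integral_congr (fun x' hx' => e q'.1 x' (g2 q'.1 q'.2 hq' x' hx'))).symm
end HD


structure Hodo (R : Set ℝ) (C s0 r0 r1 : ℝ → ℝ) (B δ : ℝ) (X T P Q : ℝ → ℝ → ℝ) : Prop where
  cP : ContinuousOn (Function.uncurry P) (Om R s0 r0)
  cQ : ContinuousOn (Function.uncurry Q) (Om R s0 r0)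
  dX : ∀ x y, (x, y) ∈ Om R s0 r0 → HasStrictFDerivAt (fun q : ℝ × ℝ => X q.1 q.2)
    ((C (Zf s0 r0 x y) * Q x y) • ContinuousLinearMap.fst ℝ ℝ ℝ
      + (C (Zf s0 r0 x y) * P x y) • ContinuousLinearMap.snd ℝ ℝ ℝ) (x, y)
  dT : ∀ x y, (x, y) ∈ Om R s0 r0 → HasStrictFDerivAt (fun q : ℝ × ℝ => T q.1 q.2)
    ((-Q x y) • ContinuousLinearMap.fst ℝ ℝ ℝ
      + (P x y) • ContinuousLinearMap.snd ℝ ℝ ℝ) (x, y)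
  X0 : ∀ x, X x x = x
  T0 : ∀ x, T x x = 0
  δpos : 0 < δ
  Ple : ∀ x y, (x, y) ∈ Om R s0 r0 → x ≤ y → δ + r1 y / (2 * B * C (Zf s0 r0 x y)) ≤ P x y
  Qle : ∀ x y, (x, y) ∈ Om R s0 r0 → x ≤ y → δ ≤ Q x y

theorem HD.exHodo {R : Set ℝ} {C C1 Φ s0 s1 r0 r1 : ℝ → ℝ} {B cm : ℝ}
    (h : HD R C C1 Φ s0 s1 r0 r1 B cm) :
    ∃ (δ : ℝ) (X T P Q : ℝ → ℝ → ℝ), Hodo R C s0 r0 r1 B δ X T P Q := by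
  have hB := h.Bpos
  have cpos : ∀ x y, (x, y) ∈ Om R s0 r0 → 0 < C (Zf s0 r0 x y) := fun x y hxy => h.Cpos _ hxy
  have cdpos : ∀ x, 0 < C (Zf s0 r0 x x) := fun x => h.Cpos _ (h.diagR x)
  have cmpos : 0 < cm := (cdpos 0).trans_le (h.cmax 0)
  have cdiag : Continuous (fun x => C (Zf s0 r0 x x)) :=
    h.Ccont.comp_continuous (h.Zcont.comp (by fun_prop : Continuous fun x : ℝ => (x, x))) h.diagR
  set gP : ℝ → ℝ := fun y => (1 - r1 y / B) / (2 * C (Zf s0 r0 y y)) with hgP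
  set gQ : ℝ → ℝ := fun y => (1 - s1 y / B) / (2 * C (Zf s0 r0 y y)) with hgQ
  have cgP : Continuous gP := by
    have := h.cr
    exact Continuous.div (by fun_prop) (continuous_const.mul cdiag) (fun x => by have := cdpos x; positivity)
  have cgQ : Continuous gQ := by
    have := h.cs
    exact Continuous.div (by fun_prop) (continuous_const.mul cdiag) (fun x => by have := cdpos x; positivity)
  set δ := 1 / (4 * cm) with hδ
  have δpos : 0 < δ := by positivity
  have gen : ∀ t x, t ≤ B / 2 → δ ≤ (1 - t / B) / (2 * C (Zf s0 r0 x x)) := by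
    intro t x ht
    have h1 : C (Zf s0 r0 x x) ≤ cm := h.cmax x
    have h2 := cdpos x
    have h3 : t / B ≤ 1 / 2 := by rw [div_le_iff₀ hB]; linarith
    rw [le_div_iff₀ (by positivity), hδ]
    have : 1 / (4 * cm) * (2 * C (Zf s0 r0 x x)) ≤ 1 / (4 * cm) * (2 * cm) := by gcongr
    have e : 1 / (4 * cm) * (2 * cm) = 1 / 2 := by field_simp; norm_num
    linarith
  have gPδ : ∀ x, δ ≤ gP x := fun x => gen _ x (h.r1le x)
  have gQδ : ∀ x, δ ≤ gQ x := fun x => gen _ x (h.s1le x)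
  obtain ⟨V, cV, eV, V0, cI1, cI2⟩ := h.exV gP gQ cgP cgQ (fun x => δpos.le.trans (gPδ x))
    (fun x => δpos.le.trans (gQδ x))
  set Ω := Om R s0 r0 with hΩ
  have cc : ContinuousOn (fun q : ℝ × ℝ => C (Zf s0 r0 q.1 q.2)) Ω :=
    h.Ccont.comp h.Zcont.continuousOn (fun q hq => hq)
  have cC1 : ContinuousOn (fun q : ℝ × ℝ => C1 (Zf s0 r0 q.1 q.2)) Ω :=
    h.C1cont.comp h.Zcont.continuousOn (fun q hq => hq)
  set P : ℝ → ℝ → ℝ := fun x y => (gP y + ∫ x' in x..y, V x' y) + r1 y / (2 * B * C (Zf s0 r0 x y)) with hP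
  set Q : ℝ → ℝ → ℝ := fun x y => (gQ x + ∫ y' in x..y, V x y') + s1 x / (2 * B * C (Zf s0 r0 x y)) with hQ
  have cP : ContinuousOn (Function.uncurry P) Ω := by
    refine ((cgP.comp continuous_snd).continuousOn.add cI1).add
      ((h.cr.comp continuous_snd).continuousOn.div (continuousOn_const.mul cc) ?_)
    intro q hq
    have := cpos q.1 q.2 hq
    positivity
  have cQ : ContinuousOn (Function.uncurry Q) Ω := by
    refine ((cgQ.comp continuous_fst).continuousOn.add cI2).add
      ((h.cs.comp continuous_fst).continuousOn.div (continuousOn_const.mul cc) ?_)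
    intro q hq
    have := cpos q.1 q.2 hq
    positivity
  set W : ℝ → ℝ → ℝ := fun x y => V x y
    + r1 y * s1 x * C1 (Zf s0 r0 x y) / (4 * B * (C (Zf s0 r0 x y)) ^ 2) with hW
  have cW : ContinuousOn (Function.uncurry W) Ω := by
    refine cV.add (((((h.cr.comp continuous_snd).mul (h.cs.comp continuous_fst)).continuousOn).mul
      cC1).div (continuousOn_const.mul (cc.pow 2)) ?_)
    intro q hq
    have := cpos q.1 q.2 hq
    positivity
  have dcx : ∀ x y, (x, y) ∈ Ω → HasDerivAt (fun x => C (Zf s0 r0 x y))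
      (C1 (Zf s0 r0 x y) * (s1 x / 2)) x := fun x y hxy => (h.dC _ hxy).comp x (h.Zdx x y)
  have dcy : ∀ x y, (x, y) ∈ Ω → HasDerivAt (fun y => C (Zf s0 r0 x y))
      (C1 (Zf s0 r0 x y) * (-(r1 y / 2))) y := fun x y hxy =>
    HasDerivAt.comp (h := fun y => Zf s0 r0 x y) y (h.dC _ hxy) (h.Zdy x y)
  have dP : ∀ x y, (x, y) ∈ Ω → HasDerivAt (fun x => P x y) (-W x y) x := by
    intro x y hxy
    have hc := cpos x y hxy
    have d1 := (ftc_left (open1 h.Omopen y) (slice1 cV y) (a := x) (b := y)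
      (fun x' hx' => h.seg1 x y hxy x' hx')).const_add (gP y)
    have d2 := (hasDerivAt_const x (r1 y)).div ((dcx x y hxy).const_mul (2 * B)) (by positivity)
    refine (d1.add d2).congr_deriv ?_
    simp only [hW]
    field_simp
    ring
  have dQ : ∀ x y, (x, y) ∈ Ω → HasDerivAt (fun y => Q x y) (W x y) y := by
    intro x y hxy
    have hc := cpos x y hxy
    have d1 := (ftc_right (open2 h.Omopen x) (slice2 cV x) (a := x) (b := y)
      (fun x' hx' => h.seg2 x y hxy x' hx')).const_add (gQ x)
    have d2 := (hasDerivAt_const y (s1 x)).div ((dcy x y hxy).const_mul (2 * B)) (by positivity)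
    refine (d1.add d2).congr_deriv ?_
    simp only [hW]
    field_simp
    ring
  have eW : ∀ x y, (x, y) ∈ Ω → W x y =
      C1 (Zf s0 r0 x y) / (4 * C (Zf s0 r0 x y)) * (s1 x * P x y + r1 y * Q x y) := by
    intro x y hxy
    have hc := cpos x y hxy
    have := eV x y hxy
    simp only [hW, hP, hQ]
    rw [this]
    field_simp
    ring
  have Pd : ∀ x, P x x = 1 / (2 * C (Zf s0 r0 x x)) := by
    intro x
    have := cdpos x
    simp only [hP, hgP, intervalIntegral.integral_same]
    field_simp
    ring
  have Qd : ∀ x, Q x x = 1 / (2 * C (Zf s0 r0 x x)) := by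
    intro x
    have := cdpos x
    simp only [hQ, hgQ, intervalIntegral.integral_same]
    field_simp
    ring
  have diag : ∀ x, (x, x) ∈ Ω := h.diagR
  set T : ℝ → ℝ → ℝ := fun x y => 0 + ∫ y' in x..y, P x y' with hT
  set X : ℝ → ℝ → ℝ := fun x y => x + ∫ y' in x..y, C (Zf s0 r0 x y') * P x y' with hX
  have T1 : ∀ x y, (x, y) ∈ Ω → HasDerivAt (fun x => T x y) (-Q x y) x :=
    poincare1 (A := P) (Bf := fun x y => -Q x y) (W := fun x y => -W x y) (y0 := fun _ => 0)
      h.Omopen diag h.seg2 cP cW.neg dP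
      (fun x y hxy => (dQ x y hxy).neg)
      (fun x => (hasDerivAt_const x (0:ℝ)).congr_deriv (by rw [Pd, Qd]; ring))
  have T2 : ∀ x y, (x, y) ∈ Ω → HasDerivAt (fun y => T x y) (P x y) y :=
    poincare2 (y0 := fun _ => 0) h.Omopen h.seg2 cP
  have cCP : ContinuousOn (Function.uncurry fun x y => C (Zf s0 r0 x y) * P x y) Ω := cc.mul cP
  have cCQ : ContinuousOn (Function.uncurry fun x y => C (Zf s0 r0 x y) * Q x y) Ω := cc.mul cQ
  have X2 : ∀ x y, (x, y) ∈ Ω → HasDerivAt (fun y => X x y) (C (Zf s0 r0 x y) * P x y) y :=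
    poincare2 (y0 := fun x => x) h.Omopen h.seg2 cCP
  have X1 : ∀ x y, (x, y) ∈ Ω → HasDerivAt (fun x => X x y) (C (Zf s0 r0 x y) * Q x y) x := by
    refine poincare1 (A := fun x y => C (Zf s0 r0 x y) * P x y) 
      (Bf := fun x y => C (Zf s0 r0 x y) * Q x y)
      (W := fun x y => C1 (Zf s0 r0 x y) * (s1 x / 2) * P x y + C (Zf s0 r0 x y) * (-W x y))
      (y0 := fun x => x) h.Omopen diag h.seg2 cCP ?_ ?_ ?_ ?_
    · exact ((cC1.mul ((h.cs.comp continuous_fst).div_const 2).continuousOn).mul cP).add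
        (cc.mul cW.neg)
    · exact fun x y hxy => (dcx x y hxy).mul (dP x y hxy)
    · intro x y hxy
      refine ((dcy x y hxy).mul (dQ x y hxy)).congr_deriv ?_
      rw [eW x y hxy]
      have hc := cpos x y hxy
      field_simp
      ring
    · intro x
      refine (hasDerivAt_id x).congr_deriv ?_
      rw [Pd, Qd]
      have := cdpos x
      field_simp
      norm_num
  refine ⟨δ, X, T, P, Q, cP, cQ, ?_, ?_, ?_, ?_, δpos, ?_, ?_⟩
  · exact strict_of_partials (A := fun x y => C (Zf s0 r0 x y) * P x y)
      (Bf := fun x y => C (Zf s0 r0 x y) * Q x y) h.Omopen cCP cCQ X1 X2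
  · exact strict_of_partials (A := P) (Bf := fun x y => - Q x y) h.Omopen cP cQ.neg T1 T2
  · intro x; simp [hX]
  · intro x; simp [hT]
  · intro x y hxy hle
    have : 0 ≤ ∫ x' in x..y, V x' y := intervalIntegral.integral_nonneg hle
      (fun x' hx' => V0 x' y (h.seg1 x y hxy x' (Icc_subset_uIcc hx')) hx'.2)
    simp only [hP]
    linarith [gPδ y]
  · intro x y hxy hle
    have : 0 ≤ ∫ y' in x..y, V x y' := intervalIntegral.integral_nonneg hle
      (fun x' hx' => V0 x x' (h.seg2 x y hxy x' (Icc_subset_uIcc hx')) hx'.1)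
    have h2 : 0 ≤ s1 x / (2 * B * C (Zf s0 r0 x y)) := by
      have := cpos x y hxy; have := h.s1pos x; positivity
    simp only [hQ]
    linarith [gQδ x]


namespace Hodo
variable {R : Set ℝ} {C C1 Φ s0 s1 r0 r1 : ℝ → ℝ} {B cm δ : ℝ} {X T P Q : ℝ → ℝ → ℝ}

lemma X1 (H : Hodo R C s0 r0 r1 B δ X T P Q) {x y : ℝ} (hxy : (x, y) ∈ Om R s0 r0) :
    HasDerivAt (fun x => X x y) (C (Zf s0 r0 x y) * Q x y) x :=
  (line_x (H.dX x y hxy).hasFDerivAt).congr_deriv (by simp)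

lemma X2 (H : Hodo R C s0 r0 r1 B δ X T P Q) {x y : ℝ} (hxy : (x, y) ∈ Om R s0 r0) :
    HasDerivAt (fun y => X x y) (C (Zf s0 r0 x y) * P x y) y :=
  (line_t (H.dX x y hxy).hasFDerivAt).congr_deriv (by simp)

lemma T1 (H : Hodo R C s0 r0 r1 B δ X T P Q) {x y : ℝ} (hxy : (x, y) ∈ Om R s0 r0) :
    HasDerivAt (fun x => T x y) (-Q x y) x :=
  (line_x (H.dT x y hxy).hasFDerivAt).congr_deriv (by simp)

lemma T2 (H : Hodo R C s0 r0 r1 B δ X T P Q) {x y : ℝ} (hxy : (x, y) ∈ Om R s0 r0) :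
    HasDerivAt (fun y => T x y) (P x y) y :=
  (line_t (H.dT x y hxy).hasFDerivAt).congr_deriv (by simp)

lemma Ppos (h : HD R C C1 Φ s0 s1 r0 r1 B cm) (H : Hodo R C s0 r0 r1 B δ X T P Q) {x y : ℝ}
    (hxy : (x, y) ∈ Om R s0 r0) (hle : x ≤ y) : 0 < P x y := by
  have h1 := H.Ple x y hxy hle
  have h2 := H.δpos
  have h3 : 0 ≤ r1 y / (2 * B * C (Zf s0 r0 x y)) := by
    have := h.Bpos; have := h.Cpos _ hxy; have := h.r1pos y
    have h4 : 0 < C (Zf s0 r0 x y) := h.Cpos _ hxy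
    positivity
  linarith

lemma Qpos (H : Hodo R C s0 r0 r1 B δ X T P Q) {x y : ℝ}
    (hxy : (x, y) ∈ Om R s0 r0) (hle : x ≤ y) : 0 < Q x y :=
  H.δpos.trans_le (H.Qle x y hxy hle)

lemma strict_of (f f' : ℝ → ℝ) {a b : ℝ} (hab : a < b) (hd : ∀ x ∈ Icc a b, HasDerivAt f (f' x) x)
    (hp : ∀ x ∈ Icc a b, 0 < f' x) : f a < f b := by
  have : StrictMonoOn f (Icc a b) := by
    apply strictMonoOn_of_deriv_pos (convex_Icc a b)
      (fun x hx => (hd x hx).continuousAt.continuousWithinAt)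
    intro x hx
    rw [(hd x (interior_subset hx)).deriv]
    exact hp x (interior_subset hx)
  exact this (left_mem_Icc.2 hab.le) (right_mem_Icc.2 hab.le) hab

lemma mono_of (f f' : ℝ → ℝ) {a b : ℝ} (hab : a ≤ b) (hd : ∀ x ∈ Icc a b, HasDerivAt f (f' x) x)
    (hp : ∀ x ∈ Icc a b, 0 ≤ f' x) : f a ≤ f b := by
  have : MonotoneOn f (Icc a b) := by
    apply monotoneOn_of_deriv_nonneg (convex_Icc a b)
      (fun x hx => (hd x hx).continuousAt.continuousWithinAt)
      (fun x hx => (hd x (interior_subset hx)).differentiableAt.differentiableWithinAt)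
    intro x hx
    rw [(hd x (interior_subset hx)).deriv]
    exact hp x (interior_subset hx)
  exact this (left_mem_Icc.2 hab) (right_mem_Icc.2 hab) hab

lemma omle (h : HD R C C1 Φ s0 s1 r0 r1 B cm) {x y x' y' : ℝ} (hxy : (x, y) ∈ Om R s0 r0)
    (hx : x ≤ x') (hy : y' ≤ y) : (x', y') ∈ Om R s0 r0 :=
  h.Rup _ _ hxy (h.Zle hx hy)

lemma Ty (h : HD R C C1 Φ s0 s1 r0 r1 B cm) (H : Hodo R C s0 r0 r1 B δ X T P Q) {x y1 y2 : ℝ}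
    (hxy : (x, y2) ∈ Om R s0 r0) (h1 : x ≤ y1) (h2 : y1 < y2) : T x y1 < T x y2 :=
  strict_of (fun y => T x y) (fun y => P x y) h2 (fun y hy => H.T2 (omle h hxy le_rfl hy.2))
    (fun y hy => H.Ppos h (omle h hxy le_rfl hy.2) (h1.trans hy.1))

lemma Xy (h : HD R C C1 Φ s0 s1 r0 r1 B cm) (H : Hodo R C s0 r0 r1 B δ X T P Q) {x y1 y2 : ℝ}
    (hxy : (x, y2) ∈ Om R s0 r0) (h1 : x ≤ y1) (h2 : y1 < y2) : X x y1 < X x y2 :=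
  strict_of (fun y => X x y) (fun y => C (Zf s0 r0 x y) * P x y) h2
    (fun y hy => H.X2 (omle h hxy le_rfl hy.2))
    (fun y hy => mul_pos (h.Cpos _ (omle h hxy le_rfl hy.2))
      (H.Ppos h (omle h hxy le_rfl hy.2) (h1.trans hy.1)))

lemma Xx (h : HD R C C1 Φ s0 s1 r0 r1 B cm) (H : Hodo R C s0 r0 r1 B δ X T P Q) {x1 x2 y : ℝ}
    (hxy : (x1, y) ∈ Om R s0 r0) (h1 : x1 < x2) (h2 : x2 ≤ y) : X x1 y < X x2 y :=
  strict_of (fun x => X x y) (fun x => C (Zf s0 r0 x y) * Q x y) h1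
    (fun x hx => H.X1 (omle h hxy hx.1 le_rfl))
    (fun x hx => mul_pos (h.Cpos _ (omle h hxy hx.1 le_rfl))
      (H.Qpos (omle h hxy hx.1 le_rfl) (hx.2.trans h2)))

lemma Tx (h : HD R C C1 Φ s0 s1 r0 r1 B cm) (H : Hodo R C s0 r0 r1 B δ X T P Q) {x1 x2 y : ℝ}
    (hxy : (x1, y) ∈ Om R s0 r0) (h1 : x1 < x2) (h2 : x2 ≤ y) : T x2 y < T x1 y := by
  have := strict_of (fun x => -T x y) (fun x => Q x y) h1
    (fun x hx => (H.T1 (omle h hxy hx.1 le_rfl)).neg.congr_deriv (neg_neg _))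
    (fun x hx => (H.Qpos (omle h hxy hx.1 le_rfl) (hx.2.trans h2)))
  simpa using this

lemma Xge (h : HD R C C1 Φ s0 s1 r0 r1 B cm) (H : Hodo R C s0 r0 r1 B δ X T P Q) {x y : ℝ}
    (hxy : (x, y) ∈ Om R s0 r0) (hle : x ≤ y) : x ≤ X x y := by
  rcases hle.eq_or_lt with rfl | hlt
  · exact (H.X0 x).ge
  · have := H.Xy h hxy le_rfl hlt
    rw [H.X0] at this
    exact this.le

lemma Xle (h : HD R C C1 Φ s0 s1 r0 r1 B cm) (H : Hodo R C s0 r0 r1 B δ X T P Q) {x y : ℝ}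
    (hxy : (x, y) ∈ Om R s0 r0) (hle : x ≤ y) : X x y ≤ y := by
  rcases hle.eq_or_lt with rfl | hlt
  · exact (H.X0 x).le
  · have := H.Xx h hxy hlt le_rfl
    rw [H.X0] at this
    exact this.le

lemma inj_aux (h : HD R C C1 Φ s0 s1 r0 r1 B cm) (H : Hodo R C s0 r0 r1 B δ X T P Q)
    {x1 y1 x2 y2 : ℝ} (m1 : (x1, y1) ∈ Om R s0 r0) (m2 : (x2, y2) ∈ Om R s0 r0)
    (l1 : x1 ≤ y1) (l2 : x2 ≤ y2) (eX : X x1 y1 = X x2 y2) (eT : T x1 y1 = T x2 y2)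
    (hx : x1 ≤ x2) : x1 = x2 ∧ y1 = y2 := by
  rcases hx.eq_or_lt with rfl | hlt
  · refine ⟨rfl, ?_⟩
    rcases lt_trichotomy y1 y2 with hy | hy | hy
    · exact absurd eT (H.Ty h m2 l1 hy).ne
    · exact hy
    · exact absurd eT (H.Ty h m1 l2 hy).ne'
  · exfalso
    rcases le_or_gt y2 y1 with hy | hy
    · have a1 := H.Tx h (omle h m1 le_rfl hy) hlt l2
      rcases hy.eq_or_lt with rfl | hy'
      · linarith
      · have := H.Ty h m1 (hlt.le.trans l2) hy'
        linarith
    · rcases le_or_gt x2 y1 with hz | hz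
      · have a1 := H.Xx h m1 hlt hz
        have a2 := H.Xy h m2 hz hy
        linarith
      · have a1 := H.Xle h m1 l1
        have a2 := H.Xge h m2 l2
        linarith

lemma inj (h : HD R C C1 Φ s0 s1 r0 r1 B cm) (H : Hodo R C s0 r0 r1 B δ X T P Q)
    {x1 y1 x2 y2 : ℝ} (m1 : (x1, y1) ∈ Om R s0 r0) (m2 : (x2, y2) ∈ Om R s0 r0)
    (l1 : x1 ≤ y1) (l2 : x2 ≤ y2) (eX : X x1 y1 = X x2 y2) (eT : T x1 y1 = T x2 y2) :
    x1 = x2 ∧ y1 = y2 := by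
  rcases le_total x1 x2 with hx | hx
  · exact H.inj_aux h m1 m2 l1 l2 eX eT hx
  · have := H.inj_aux h m2 m1 l2 l1 eX.symm eT.symm hx
    exact ⟨this.1.symm, this.2.symm⟩

lemma Tge (h : HD R C C1 Φ s0 s1 r0 r1 B cm) (H : Hodo R C s0 r0 r1 B δ X T P Q) {x y : ℝ}
    (hxy : (x, y) ∈ Om R s0 r0) (hle : x ≤ y) :
    δ * (y - x) + (Φ (Zf s0 r0 x y) - Φ (Zf s0 r0 x x)) / B ≤ T x y := by
  have := mono_of (fun y => T x y - (δ * (y - x) + (Φ (Zf s0 r0 x y) - Φ (Zf s0 r0 x x)) / B))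
    (fun y => P x y - (δ + r1 y / (2 * B * C (Zf s0 r0 x y)))) hle ?_ ?_
  · simp [H.T0] at this
    exact this
  · intro y' hy'
    have hm := omle h hxy le_rfl hy'.2
    have d1 : HasDerivAt (fun y => Φ (Zf s0 r0 x y)) (-(1 / C (Zf s0 r0 x y')) * (-(r1 y' / 2))) y' :=
      HasDerivAt.comp (h := fun y => Zf s0 r0 x y) y' (h.dΦ _ hm) (h.Zdy x y')
    have d2 := (((hasDerivAt_id y').sub_const x).const_mul δ).add
      ((d1.sub_const (Φ (Zf s0 r0 x x))).div_const B)
    refine ((H.T2 hm).sub d2).congr_deriv ?_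
    have hB := h.Bpos
    have hC : 0 < C (Zf s0 r0 x y') := h.Cpos _ hm
    field_simp
  · intro y' hy'
    have := H.Ple x y' (omle h hxy le_rfl hy'.2) hy'.1
    linarith

lemma Xup (h : HD R C C1 Φ s0 s1 r0 r1 B cm) (H : Hodo R C s0 r0 r1 B δ X T P Q) {x y : ℝ}
    (hxy : (x, y) ∈ Om R s0 r0) (hle : x ≤ y) : X x y ≤ x + cm * T x y := by
  have := mono_of (fun y => cm * T x y - X x y)
    (fun y => cm * P x y - C (Zf s0 r0 x y) * P x y) hle ?_ ?_
  · simp only [H.T0, H.X0] at this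
    linarith
  · intro y' hy'
    have hm := omle h hxy le_rfl hy'.2
    exact ((H.T2 hm).const_mul cm).sub (H.X2 hm)
  · intro y' hy'
    have hm := omle h hxy le_rfl hy'.2
    have h1 : C (Zf s0 r0 x y') ≤ cm := (h.Cmono hm (h.Zle le_rfl hy'.1)).trans (h.cmax x)
    have := H.Ppos h hm hy'.1
    nlinarith

lemma Φanti (h : HD R C C1 Φ s0 s1 r0 r1 B cm) {z w : ℝ} (hz : z ∈ R) (hzw : z ≤ w) : Φ w ≤ Φ z := by
  have hsub : ∀ x ∈ Icc z w, x ∈ R := fun x hx => h.Rup z x hz hx.1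
  have := mono_of (fun x => -Φ x) (fun x => 1 / C x) hzw
    (fun x hx => ((h.dΦ x (hsub x hx)).neg).congr_deriv (neg_neg _))
    (fun x hx => by have := h.Cpos x (hsub x hx); positivity)
  linarith

lemma ex_y (h : HD R C C1 Φ s0 s1 r0 r1 B cm) (H : Hodo R C s0 r0 r1 B δ X T P Q)
    (hvac : ∀ N, ∃ m ∈ R, N ≤ Φ m) {M : ℝ} (hM : ∀ x, Φ (Zf s0 r0 x x) ≤ M) (x t : ℝ) (ht : 0 ≤ t) :
    ∃ y, x ≤ y ∧ (x, y) ∈ Om R s0 r0 ∧ T x y = t := by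
  have hB := h.Bpos
  have hδ := H.δpos
  have : ∃ y1, x ≤ y1 ∧ (x, y1) ∈ Om R s0 r0 ∧ t ≤ T x y1 := by
    set b1 := x + t / δ with hb1
    have hxb : x ≤ b1 := by have : 0 ≤ t / δ := by positivity
                            linarith
    by_cases hin : (x, b1) ∈ Om R s0 r0
    · refine ⟨b1, hxb, hin, ?_⟩
      have h1 := H.Tge h hin hxb
      have h2 := Φanti h hin (h.Zle le_rfl hxb)
      have h3 : 0 ≤ (Φ (Zf s0 r0 x b1) - Φ (Zf s0 r0 x x)) / B := div_nonneg (by linarith) hB.le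
      have h4 : δ * (b1 - x) = t := by rw [hb1]; field_simp; ring
      linarith
    · obtain ⟨m, hm, hN⟩ := hvac (M + B * t + 1)
      have hmd : m ≤ Zf s0 r0 x x := by
        by_contra hc
        push Not at hc
        have := Φanti h (h.diagR x) hc.le
        have := hM x
        have : 0 ≤ B * t := by positivity
        linarith
      have hmb : Zf s0 r0 x b1 ≤ m := by
        by_contra hc
        push Not at hc
        exact hin (h.Rup _ _ hm hc.le)
      have hc : ContinuousOn (fun y => Zf s0 r0 x y) (Icc x b1) :=
        (h.Zcont.comp (by fun_prop : Continuous fun y : ℝ => (x, y))).continuousOn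
      obtain ⟨y, hy, hy'⟩ := intermediate_value_Icc' hxb hc ⟨hmb, hmd⟩
      have hym : (x, y) ∈ Om R s0 r0 := by show Zf s0 r0 x y ∈ R; rw [show Zf s0 r0 x y = m from hy']; exact hm
      refine ⟨y, hy.1, hym, ?_⟩
      have h1 := H.Tge h hym hy.1
      rw [show Zf s0 r0 x y = m from hy'] at h1
      have h2 : t ≤ (Φ m - Φ (Zf s0 r0 x x)) / B := by
        rw [le_div_iff₀ hB]; linarith [hM x]
      have h3 : 0 ≤ δ * (y - x) := mul_nonneg hδ.le (by linarith [hy.1])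
      linarith
  obtain ⟨y1, l1, m1, ht1⟩ := this
  have hc : ContinuousOn (fun y => T x y) (Icc x y1) := fun y hy =>
    (H.T2 (omle h m1 le_rfl hy.2)).continuousAt.continuousWithinAt
  obtain ⟨y, hy, hy'⟩ := intermediate_value_Icc l1 hc ⟨by rw [H.T0]; exact ht, ht1⟩
  exact ⟨y, hy.1, omle h m1 le_rfl hy.2, hy'⟩

theorem surj (h : HD R C C1 Φ s0 s1 r0 r1 B cm) (H : Hodo R C s0 r0 r1 B δ X T P Q)
    (hvac : ∀ N, ∃ m ∈ R, N ≤ Φ m) {M : ℝ} (hM : ∀ x, Φ (Zf s0 r0 x x) ≤ M) (x t : ℝ) (ht : 0 ≤ t) :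
    ∃ q : ℝ × ℝ, q.1 ≤ q.2 ∧ q ∈ Om R s0 r0 ∧ X q.1 q.2 = x ∧ T q.1 q.2 = t := by
  rcases ht.eq_or_lt with rfl | htp
  · exact ⟨(x, x), le_rfl, h.diagR x, H.X0 x, H.T0 x⟩
  choose Y hY1 hY2 hY3 using fun x => H.ex_y h hvac hM x t ht
  have contY : Continuous Y := by
    rw [continuous_iff_continuousAt]
    intro x0
    have hlt : x0 < Y x0 := by
      refine lt_of_le_of_ne (hY1 x0) (fun e => ?_)
      have := hY3 x0
      rw [← e, H.T0] at this
      linarith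
    have hopen := (open2 h.Omopen x0).mem_nhds (hY2 x0)
    obtain ⟨ε0, hε0, hball⟩ := Metric.nhds_basis_closedBall.mem_iff.1 hopen
    rw [Metric.continuousAt_iff']
    intro ε hε
    set η := min (min (ε / 2) ε0) ((Y x0 - x0) / 2) with hη
    have hη0 : 0 < η := by
      have : 0 < Y x0 - x0 := by linarith
      positivity
    have η1 : η ≤ ε / 2 := (min_le_left _ _).trans (min_le_left _ _)
    have η2 : η ≤ ε0 := (min_le_left _ _).trans (min_le_right _ _)
    have η3 : η ≤ (Y x0 - x0) / 2 := min_le_right _ _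
    have mp : (x0, Y x0 + η) ∈ Om R s0 r0 := hball (by
      rw [Metric.mem_closedBall, Real.dist_eq, abs_le]; constructor <;> linarith)
    have mm : (x0, Y x0 - η) ∈ Om R s0 r0 := omle h mp le_rfl (by linarith)
    have t1 : T x0 (Y x0 - η) < t := by
      rw [← hY3 x0]; exact H.Ty h (hY2 x0) (by linarith) (by linarith)
    have t2 : t < T x0 (Y x0 + η) := by
      rw [← hY3 x0]; exact H.Ty h mp (hY1 x0) (by linarith)
    have e1 := (H.T1 mm).continuousAt.eventually (gt_mem_nhds t1)
    have e2 := (H.T1 mp).continuousAt.eventually (lt_mem_nhds t2)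
    have e3 : ∀ᶠ x in nhds x0, x < Y x0 - η := gt_mem_nhds (by linarith)
    have e4 := (open1 h.Omopen _).mem_nhds mp
    filter_upwards [e1, e2, e3, e4] with x f1 f2 f3 f4
    rw [Real.dist_eq, abs_lt]
    constructor
    · by_contra hc
      push Not at hc
      have hc' : Y x < Y x0 - η := by linarith
      have := H.Ty h (omle h f4 le_rfl (by linarith)) (hY1 x) hc'
      rw [hY3] at this
      linarith
    · by_contra hc
      push Not at hc
      have hc' : Y x0 + η < Y x := by linarith
      have := H.Ty h (hY2 x) (by linarith) hc'
      rw [hY3] at this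
      linarith
  have contX : Continuous (fun x => X x (Y x)) := by
    rw [continuous_iff_continuousAt]
    intro x0
    have h1 : ContinuousAt (fun q : ℝ × ℝ => X q.1 q.2) (x0, Y x0) :=
      (H.dX _ _ (hY2 x0)).hasFDerivAt.continuousAt
    exact ContinuousAt.comp (f := fun x => (x, Y x)) h1 (continuous_id.prodMk contY).continuousAt
  have hcm : 0 ≤ cm := (h.Cpos _ (h.diagR 0)).le.trans (h.cmax 0)
  have hle : x - cm * t ≤ x := by have : 0 ≤ cm * t := by positivity
                                  linarith
  obtain ⟨x', -, hx'⟩ := intermediate_value_Icc hle contX.continuousOn (show x ∈ Icc _ _ from by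
    constructor
    · have := H.Xup h (hY2 (x - cm * t)) (hY1 _)
      rw [hY3] at this
      show X _ _ ≤ _
      linarith
    · exact H.Xge h (hY2 x) (hY1 x))
  exact ⟨(x', Y x'), hY1 x', hY2 x', hx', hY3 x'⟩
end Hodo


noncomputable def iPhi (φ : ℝ → ℝ) : ℝ → ℝ := Function.invFunOn φ (Ioi 0)

section inv
variable {p c c1 φ : ℝ → ℝ}

lemma iPhi_pos {z : ℝ} (hz : z ∈ φ '' Ioi 0) : 0 < iPhi φ z := Function.invFunOn_mem hz

lemma phi_iPhi {z : ℝ} (hz : z ∈ φ '' Ioi 0) : φ (iPhi φ z) = z := Function.invFunOn_eq hz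

lemma PData.iPhi_phi (h : PData p c c1 φ) {v : ℝ} (hv : 0 < v) : iPhi φ (φ v) = v :=
  h.phiAnti.injOn (iPhi_pos ⟨v, hv, rfl⟩) hv (phi_iPhi ⟨v, hv, rfl⟩)

lemma PData.Rup (h : PData p c c1 φ) (z w : ℝ) (hz : z ∈ φ '' Ioi 0) (hzw : z ≤ w) :
    w ∈ φ '' Ioi 0 := by
  obtain ⟨v, hv, rfl⟩ := hz
  obtain ⟨v', hv', hw⟩ := h.phitop w
  have hsub : uIcc v v' ⊆ Ioi 0 := fun x hx => (lt_min hv hv').trans_le hx.1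
  have hc : ContinuousOn φ (uIcc v v') := fun x hx =>
    (h.dphi x (hsub hx)).continuousAt.continuousWithinAt
  obtain ⟨x, hx, e⟩ := intermediate_value_uIcc hc (Icc_subset_uIcc ⟨hzw, hw⟩)
  exact ⟨x, hsub hx, e⟩

lemma PData.Ropen (h : PData p c c1 φ) : IsOpen (φ '' Ioi 0) := by
  rw [isOpen_iff_mem_nhds]
  rintro _ ⟨v, hv, rfl⟩
  have hv : 0 < v := hv
  have h1 : φ (v + 1) < φ v := h.phiAnti hv (by simp; linarith) (by linarith)
  filter_upwards [Ioi_mem_nhds h1] with w hw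
  exact h.Rup _ _ ⟨v + 1, by simp; linarith, rfl⟩ (le_of_lt hw)

lemma PData.iPhi_cont (h : PData p c c1 φ) {z : ℝ} (hz : z ∈ φ '' Ioi 0) :
    ContinuousAt (iPhi φ) z := by
  have hp := iPhi_pos hz
  have he := phi_iPhi hz
  refine tendsto_order.2 ⟨fun a ha => ?_, fun a ha => ?_⟩
  · have hb0 : 0 < max a (iPhi φ z / 2) := lt_max_of_lt_right (by linarith)
    have hb1 : max a (iPhi φ z / 2) < iPhi φ z := max_lt ha (by linarith)
    have h1 := h.phiAnti hb0 hp hb1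
    rw [he] at h1
    filter_upwards [Iio_mem_nhds h1, h.Ropen.mem_nhds hz] with w hw hwR
    refine (le_max_left a (iPhi φ z / 2)).trans_lt ?_
    by_contra! hcon
    have := h.phiAnti.antitoneOn (iPhi_pos hwR) hb0 hcon
    rw [phi_iPhi hwR] at this
    exact absurd hw (not_lt.2 this)
  · have ha0 : 0 < a := hp.trans ha
    have h1 := h.phiAnti hp ha0 ha
    rw [he] at h1
    filter_upwards [Ioi_mem_nhds h1, h.Ropen.mem_nhds hz] with w hw hwR
    by_contra! hcon
    have := h.phiAnti.antitoneOn ha0 (iPhi_pos hwR) hcon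
    rw [phi_iPhi hwR] at this
    exact absurd hw (not_lt.2 this)

lemma PData.iPhi_deriv (h : PData p c c1 φ) {z : ℝ} (hz : z ∈ φ '' Ioi 0) :
    HasDerivAt (iPhi φ) (-(1 / c (iPhi φ z))) z := by
  have hp := iPhi_pos hz
  have := HasDerivAt.of_local_left_inverse (h.iPhi_cont hz) (h.dphi _ hp)
    (neg_ne_zero.2 (h.cpos _ hp).ne') (by
      filter_upwards [h.Ropen.mem_nhds hz] with w hw using phi_iPhi hw)
  refine this.congr_deriv ?_
  rw [inv_neg, one_div]

theorem mkHD (h : PData p c c1 φ) {M₁ M₂ : ℝ} {τ₀ u₀ : ℝ → ℝ} (hA : AssumptionA M₁ M₂ τ₀ u₀)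
    (h1 : ∀ x, 0 ≤ deriv (fun x => u₀ x + φ (τ₀ x)) x)
    (h2 : ∀ x, 0 ≤ deriv (fun x => u₀ x - φ (τ₀ x)) x) :
    HD (φ '' Ioi 0) (fun z => c (iPhi φ z)) (fun z => c1 (iPhi φ z) * (-(1 / c (iPhi φ z)))) (iPhi φ)
      (fun x => u₀ x + φ (τ₀ x)) (fun x => deriv u₀ x - c (τ₀ x) * deriv τ₀ x)
      (fun x => u₀ x - φ (τ₀ x)) (fun x => deriv u₀ x + c (τ₀ x) * deriv τ₀ x)
      (2 * (M₁ + c M₂ * M₁)) (c M₂) := by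
  obtain ⟨ct, cu, hM1, hM2, hb, hl⟩ := hA
  have tpos : ∀ x, 0 < τ₀ x := fun x => hM2.trans_le (hl x)
  have dt : ∀ x, HasDerivAt τ₀ (deriv τ₀ x) x := fun x =>
    (ct.differentiable one_ne_zero x).hasDerivAt
  have du : ∀ x, HasDerivAt u₀ (deriv u₀ x) x := fun x =>
    (cu.differentiable one_ne_zero x).hasDerivAt
  have dφ : ∀ x, HasDerivAt (fun x => φ (τ₀ x)) (-c (τ₀ x) * deriv τ₀ x) x := fun x =>
    (h.dphi _ (tpos x)).comp x (dt x)
  have ds : ∀ x, HasDerivAt (fun x => u₀ x + φ (τ₀ x)) (deriv u₀ x - c (τ₀ x) * deriv τ₀ x) x :=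
    fun x => ((du x).add (dφ x)).congr_deriv (by ring)
  have dr : ∀ x, HasDerivAt (fun x => u₀ x - φ (τ₀ x)) (deriv u₀ x + c (τ₀ x) * deriv τ₀ x) x :=
    fun x => ((du x).sub (dφ x)).congr_deriv (by ring)
  have cc : ContinuousOn c (Ioi 0) := fun v hv => (h.dc v hv).continuousAt.continuousWithinAt
  have cct : Continuous (fun x => c (τ₀ x)) := cc.comp_continuous ct.continuous tpos
  have cdt := ct.continuous_deriv le_rfl
  have cdu := cu.continuous_deriv le_rfl
  have cM := h.cpos _ hM2
  have cle : ∀ x, c (τ₀ x) ≤ c M₂ := fun x => h.cAnti hM2 (hl x)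
  have cmul : ∀ x, |c (τ₀ x) * deriv τ₀ x| ≤ c M₂ * M₁ := by
    intro x
    rw [abs_mul, abs_of_pos (h.cpos _ (tpos x))]
    have : |deriv τ₀ x| ≤ M₁ := by
      have := hb x
      linarith [abs_nonneg (τ₀ x), abs_nonneg (u₀ x), abs_nonneg (deriv u₀ x)]
    exact mul_le_mul (cle x) this (abs_nonneg _) cM.le
  have ule : ∀ x, deriv u₀ x ≤ M₁ := fun x => by
    have := hb x
    linarith [abs_nonneg (τ₀ x), abs_nonneg (u₀ x), abs_nonneg (deriv τ₀ x), le_abs_self (deriv u₀ x)]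
  have tle : ∀ x, τ₀ x ≤ M₁ := fun x => by
    have := hb x
    linarith [abs_nonneg (deriv u₀ x), abs_nonneg (u₀ x), abs_nonneg (deriv τ₀ x), le_abs_self (τ₀ x)]
  have hc : ContinuousOn (iPhi φ) (φ '' Ioi 0) := fun z hz => (h.iPhi_cont hz).continuousWithinAt
  have hZ : ∀ x, (u₀ x + φ (τ₀ x) - (u₀ x - φ (τ₀ x))) / 2 = φ (τ₀ x) := fun x => by ring
  constructor
  · exact h.Ropen
  · exact h.Rup
  · exact fun z hz => h.cpos _ (iPhi_pos hz)
  · exact fun z hz => (h.dc _ (iPhi_pos hz)).comp z (h.iPhi_deriv hz)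
  · intro z hz
    have a := h.c1neg _ (iPhi_pos hz)
    have b := h.cpos _ (iPhi_pos hz)
    rw [mul_neg, ← neg_mul]
    exact mul_nonneg (by linarith) (by positivity)
  · refine (h.c1cont.comp hc fun z hz => iPhi_pos hz).mul (ContinuousOn.neg ?_)
    exact continuousOn_const.div (cc.comp hc fun z hz => iPhi_pos hz)
      (fun z hz => (h.cpos _ (iPhi_pos hz)).ne')
  · exact fun z hz => h.iPhi_deriv hz
  · exact ds
  · exact dr
  · exact cdu.sub (cct.mul cdt)
  · exact cdu.add (cct.mul cdt)
  · intro x; rw [← (ds x).deriv]; exact h1 x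
  · intro x; rw [← (dr x).deriv]; exact h2 x
  · intro x
    have := neg_abs_le (c (τ₀ x) * deriv τ₀ x)
    linarith [cmul x, ule x]
  · intro x
    have := le_abs_self (c (τ₀ x) * deriv τ₀ x)
    linarith [cmul x, ule x]
  · positivity
  · refine ⟨φ M₁, ⟨M₁, hM1, rfl⟩, fun x => ?_⟩
    rw [hZ]
    exact h.phiAnti.antitoneOn (tpos x) hM1 (tle x)
  · intro x
    simp only [hZ, h.iPhi_phi (tpos x)]
    exact cle x

end inv


namespace Hodo
variable {R : Set ℝ} {C C1 Φ s0 s1 r0 r1 : ℝ → ℝ} {B cm δ : ℝ} {X T P Q : ℝ → ℝ → ℝ}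

noncomputable def Gd (c P Q : ℝ) : ℝ × ℝ →L[ℝ] ℝ × ℝ :=
  ((1 / (2 * c * Q)) • ContinuousLinearMap.fst ℝ ℝ ℝ - (1 / (2 * Q)) • ContinuousLinearMap.snd ℝ ℝ ℝ).prod
  ((1 / (2 * c * P)) • ContinuousLinearMap.fst ℝ ℝ ℝ + (1 / (2 * P)) • ContinuousLinearMap.snd ℝ ℝ ℝ)

noncomputable def Fd (c P Q : ℝ) : ℝ × ℝ →L[ℝ] ℝ × ℝ :=
  ((c * Q) • ContinuousLinearMap.fst ℝ ℝ ℝ + (c * P) • ContinuousLinearMap.snd ℝ ℝ ℝ).prod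
  ((-Q) • ContinuousLinearMap.fst ℝ ℝ ℝ + P • ContinuousLinearMap.snd ℝ ℝ ℝ)

lemma Fd_cont : Continuous (fun z : ℝ × ℝ × ℝ => Fd z.1 z.2.1 z.2.2) := by
  have e : (fun z : ℝ × ℝ × ℝ => Fd z.1 z.2.1 z.2.2) = fun z =>
      (z.1 * z.2.2) • ((ContinuousLinearMap.fst ℝ ℝ ℝ).prod (0 : ℝ × ℝ →L[ℝ] ℝ))
      + (z.1 * z.2.1) • ((ContinuousLinearMap.snd ℝ ℝ ℝ).prod (0 : ℝ × ℝ →L[ℝ] ℝ))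
      + (-z.2.2) • ((0 : ℝ × ℝ →L[ℝ] ℝ).prod (ContinuousLinearMap.fst ℝ ℝ ℝ))
      + z.2.1 • ((0 : ℝ × ℝ →L[ℝ] ℝ).prod (ContinuousLinearMap.snd ℝ ℝ ℝ)) := by
    funext z
    ext <;> simp [Fd]
  rw [e]
  fun_prop

noncomputable def Fe (c P Q : ℝ) (hc : 0 < c) (hP : 0 < P) (hQ : 0 < Q) : (ℝ × ℝ) ≃L[ℝ] ℝ × ℝ :=
  ContinuousLinearEquiv.equivOfInverse (Fd c P Q) (Gd c P Q)
    (fun q => by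
      ext <;> simp [Fd, Gd] <;> field_simp <;> ring)
    (fun q => by
      ext <;> simp [Fd, Gd] <;> field_simp <;> ring)

lemma locInv (h : HD R C C1 Φ s0 s1 r0 r1 B cm) (H : Hodo R C s0 r0 r1 B δ X T P Q) {a b : ℝ}
    (hab : (a, b) ∈ Om R s0 r0) (hle : a ≤ b) :
    ∃ G : ℝ × ℝ → ℝ × ℝ, ContDiffAt ℝ 1 G (X a b, T a b) ∧ G (X a b, T a b) = (a, b) ∧
      HasFDerivAt G (Gd (C (Zf s0 r0 a b)) (P a b) (Q a b)) (X a b, T a b) ∧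
      ∀ᶠ w in nhds (X a b, T a b), (X (G w).1 (G w).2, T (G w).1 (G w).2) = w := by
  set F : ℝ × ℝ → ℝ × ℝ := fun q => (X q.1 q.2, T q.1 q.2) with hF
  have dF : ∀ q ∈ Om R s0 r0, HasFDerivAt F (Fd (C (Zf s0 r0 q.1 q.2)) (P q.1 q.2) (Q q.1 q.2)) q :=
    fun q hq => (H.dX q.1 q.2 hq).hasFDerivAt.prodMk (H.dT q.1 q.2 hq).hasFDerivAt
  have cC : ContinuousOn (fun q : ℝ × ℝ => C (Zf s0 r0 q.1 q.2)) (Om R s0 r0) :=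
    h.Ccont.comp h.Zcont.continuousOn (fun q hq => hq)
  have cP : ContinuousOn (fun q : ℝ × ℝ => P q.1 q.2) (Om R s0 r0) := H.cP
  have cQ : ContinuousOn (fun q : ℝ × ℝ => Q q.1 q.2) (Om R s0 r0) := H.cQ
  have cF : ContinuousOn (fun q : ℝ × ℝ => Fd (C (Zf s0 r0 q.1 q.2)) (P q.1 q.2) (Q q.1 q.2))
      (Om R s0 r0) := by
    have hz : ContinuousOn (fun q : ℝ × ℝ => (C (Zf s0 r0 q.1 q.2), P q.1 q.2, Q q.1 q.2))
      (Om R s0 r0) := cC.prodMk (cP.prodMk cQ)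
    exact ContinuousOn.congr (Fd_cont.comp_continuousOn hz) (fun q _ => rfl)
  have hFc : ContDiffAt ℝ 1 F (a, b) :=
    contDiffAt_one_iff.2 ⟨_, _, h.Omopen.mem_nhds hab, cF, dF⟩
  have hc := h.Cpos _ hab
  have hP := H.Ppos h hab hle
  have hQ := H.Qpos hab hle
  have hFe : HasFDerivAt F ((Fe _ _ _ hc hP hQ : (ℝ × ℝ) ≃L[ℝ] ℝ × ℝ) : ℝ × ℝ →L[ℝ] ℝ × ℝ) (a, b) := dF _ hab
  have hs := hFc.hasStrictFDerivAt' hFe one_ne_zero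
  refine ⟨hFc.localInverse hFe one_ne_zero, hFc.to_localInverse hFe one_ne_zero,
    hFc.localInverse_apply_image hFe one_ne_zero, ?_, hs.eventually_right_inverse⟩
  exact hs.to_localInverse.hasFDerivAt

lemma locGood (h : HD R C C1 Φ s0 s1 r0 r1 B cm) (H : Hodo R C s0 r0 r1 B δ X T P Q) {a b : ℝ}
    (hab : (a, b) ∈ Om R s0 r0) (hle : a ≤ b) {x t : ℝ} (hx : X a b = x) (ht : T a b = t) :
    ∃ G : ℝ × ℝ → ℝ × ℝ, ContDiffAt ℝ 1 G (x, t) ∧ G (x, t) = (a, b) ∧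
      HasFDerivAt G (Gd (C (Zf s0 r0 a b)) (P a b) (Q a b)) (x, t) ∧
      ∀ᶠ w in nhds (x, t), 0 ≤ w.2 → (G w ∈ Om R s0 r0 ∧ (G w).1 ≤ (G w).2 ∧
        X (G w).1 (G w).2 = w.1 ∧ T (G w).1 (G w).2 = w.2) := by
  subst hx ht
  obtain ⟨G, g1, g2, g3, g4⟩ := H.locInv h hab hle
  refine ⟨G, g1, g2, g3, ?_⟩
  have gc : Tendsto G (nhds (X a b, T a b)) (nhds (a, b)) := by
    have := g1.continuousAt.tendsto
    rwa [g2] at this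
  have gΩ := gc.eventually (h.Omopen.mem_nhds hab)
  rcases hle.lt_or_eq with hlt | rfl
  · have gl : ∀ᶠ w in nhds (X a b, T a b), (G w).1 < (G w).2 :=
      gc.eventually ((isOpen_lt continuous_fst continuous_snd).mem_nhds hlt)
    filter_upwards [g4, gΩ, gl] with w e1 e2 e3 _
    exact ⟨e2, e3.le, congrArg Prod.fst e1, congrArg Prod.snd e1⟩
  · have hP := H.Ppos h hab hle
    have cP : ContinuousAt (Function.uncurry P) (a, a) := H.cP.continuousAt (h.Omopen.mem_nhds hab)
    have ev : ∀ᶠ q in nhds (a, a), q ∈ Om R s0 r0 ∧ 0 < Function.uncurry P q :=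
      Filter.Eventually.and (h.Omopen.mem_nhds hab) (cP.eventually (lt_mem_nhds hP))
    obtain ⟨ε, hε, hball⟩ := Metric.eventually_nhds_iff_ball.1 ev
    filter_upwards [g4, gΩ, gc.eventually (Metric.ball_mem_nhds _ hε)] with w e1 e2 e3 hw
    refine ⟨e2, ?_, congrArg Prod.fst e1, congrArg Prod.snd e1⟩
    by_contra! hcon
    have hT : T (G w).1 (G w).2 = w.2 := congrArg Prod.snd e1
    have e3 : G w ∈ Metric.ball (a, a) ε := e3
    rw [← ball_prod_same, mem_prod, Real.ball_eq_Ioo] at e3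
    have hb : ∀ y ∈ Icc (G w).2 (G w).1, ((G w).1, y) ∈ Metric.ball (a, a) ε := by
      intro y hy
      rw [← ball_prod_same, mem_prod, Real.ball_eq_Ioo]
      exact ⟨e3.1, e3.2.1.trans_le hy.1, hy.2.trans_lt e3.1.2⟩
    have := strict_of (fun y => T (G w).1 y) (fun y => P (G w).1 y) hcon
      (fun y hy => H.T2 (hball _ (hb y hy)).1) (fun y hy => (hball _ (hb y hy)).2)
    simp only [H.T0] at this
    linarith

theorem exq (h : HD R C C1 Φ s0 s1 r0 r1 B cm) (H : Hodo R C s0 r0 r1 B δ X T P Q)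
    (hs : ∀ x t, 0 ≤ t → ∃ q : ℝ × ℝ, q.1 ≤ q.2 ∧ q ∈ Om R s0 r0 ∧ X q.1 q.2 = x ∧ T q.1 q.2 = t) :
    ∃ q : ℝ × ℝ → ℝ × ℝ, (∀ x, q (x, 0) = (x, x)) ∧ ∀ x t, 0 ≤ t →
      q (x, t) ∈ Om R s0 r0 ∧ ContDiffWithinAt ℝ 1 q (univ ×ˢ Ici 0) (x, t) ∧
      ∃ P Q : ℝ, 0 < P ∧ 0 < Q ∧ HasFDerivWithinAt q
        (Gd (C (Zf s0 r0 (q (x, t)).1 (q (x, t)).2)) P Q) (univ ×ˢ Ici 0) (x, t) := by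
  have hs' : ∀ w : ℝ × ℝ, ∃ q : ℝ × ℝ, 0 ≤ w.2 → q.1 ≤ q.2 ∧ q ∈ Om R s0 r0 ∧ X q.1 q.2 = w.1 ∧
      T q.1 q.2 = w.2 := by
    intro w
    by_cases hw : 0 ≤ w.2
    · obtain ⟨q, hq⟩ := hs w.1 w.2 hw
      exact ⟨q, fun _ => hq⟩
    · exact ⟨0, fun h => absurd h hw⟩
  choose q hq using hs'
  refine ⟨q, fun x => ?_, fun x t ht => ?_⟩
  · obtain ⟨a1, a2, a3, a4⟩ := hq (x, 0) le_rfl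
    have := H.inj h (x1 := (q (x, 0)).1) (y1 := (q (x, 0)).2) (x2 := x) (y2 := x) a2 (h.diagR x) a1 le_rfl
      (by rw [a3, H.X0]) (by rw [a4, H.T0])
    exact Prod.ext this.1 this.2
  · obtain ⟨a1, a2, a3, a4⟩ := hq (x, t) ht
    obtain ⟨G, g1, g2, g3, g4⟩ := H.locGood h (a := (q (x, t)).1) (b := (q (x, t)).2) a2 a1 a3 a4
    have ev : ∀ᶠ w in nhdsWithin (x, t) (univ ×ˢ Ici 0), q w = G w := by
      filter_upwards [mem_nhdsWithin_of_mem_nhds g4, self_mem_nhdsWithin] with w hw hw2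
      have hw2 : 0 ≤ w.2 := hw2.2
      obtain ⟨b1, b2, b3, b4⟩ := hq w hw2
      obtain ⟨c1, c2, c3, c4⟩ := hw hw2
      have := H.inj h b2 c1 b1 c2 (b3.trans c3.symm) (b4.trans c4.symm)
      exact Prod.ext this.1 this.2
    refine ⟨a2, g1.contDiffWithinAt.congr_of_eventuallyEq ev g2.symm,
      P (q (x, t)).1 (q (x, t)).2, Q (q (x, t)).1 (q (x, t)).2, H.Ppos h a2 a1, H.Qpos a2 a1,
      g3.hasFDerivWithinAt.congr_of_eventuallyEq ev g2.symm⟩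

end Hodo


section sol
variable {R : Set ℝ} {C C1 Φ s0 s1 r0 r1 : ℝ → ℝ} {B cm : ℝ}

lemma cd1_of {f f' : ℝ → ℝ} {S : Set ℝ} (hS : IsOpen S) (hd : ∀ z ∈ S, HasDerivAt f (f' z) z)
    (hc : ContinuousOn f' S) {z : ℝ} (hz : z ∈ S) : ContDiffAt ℝ 1 f z := by
  refine contDiffAt_one_iff.2 ⟨fun z => f' z • (ContinuousLinearMap.id ℝ ℝ), S, hS.mem_nhds hz,
    hc.smul continuousOn_const, fun w hw => ?_⟩
  refine (hd w hw).hasFDerivAt.congr_fderiv ?_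
  ext; simp

lemma solcore (h : HD R C C1 Φ s0 s1 r0 r1 B cm) {q : ℝ × ℝ → ℝ × ℝ} {w : ℝ × ℝ} {S : Set (ℝ × ℝ)}
    (hq : q w ∈ Om R s0 r0) (hc : ContDiffWithinAt ℝ 1 q S w) {P Q : ℝ} (hP : 0 < P) (hQ : 0 < Q)
    (hd : HasFDerivWithinAt q (Hodo.Gd (C (Zf s0 r0 (q w).1 (q w).2)) P Q) S w) :
    ContDiffWithinAt ℝ 1 (fun w => Φ (Zf s0 r0 (q w).1 (q w).2)) S w ∧
    ContDiffWithinAt ℝ 1 (fun w => (s0 (q w).1 + r0 (q w).2) / 2) S w ∧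
    ∃ a b : ℝ, HasFDerivWithinAt (fun w => Φ (Zf s0 r0 (q w).1 (q w).2))
      (a • ContinuousLinearMap.fst ℝ ℝ ℝ + b • ContinuousLinearMap.snd ℝ ℝ ℝ) S w ∧
      HasFDerivWithinAt (fun w => (s0 (q w).1 + r0 (q w).2) / 2)
      (b • ContinuousLinearMap.fst ℝ ℝ ℝ + ((C (Zf s0 r0 (q w).1 (q w).2)) ^ 2 * a) •
        ContinuousLinearMap.snd ℝ ℝ ℝ) S w := by
  have cα : ContDiffWithinAt ℝ 1 (fun w => (q w).1) S w := contDiff_fst.contDiffAt.comp_contDiffWithinAt w hc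
  have cβ : ContDiffWithinAt ℝ 1 (fun w => (q w).2) S w := contDiff_snd.contDiffAt.comp_contDiffWithinAt w hc
  have cs : ContDiffWithinAt ℝ 1 (fun w => s0 (q w).1) S w :=
    (cd1_of isOpen_univ (fun z _ => h.ds z) h.cs.continuousOn (mem_univ _)).comp_contDiffWithinAt w cα
  have cr : ContDiffWithinAt ℝ 1 (fun w => r0 (q w).2) S w :=
    (cd1_of isOpen_univ (fun z _ => h.dr z) h.cr.continuousOn (mem_univ _)).comp_contDiffWithinAt w cβ
  have cZ : ContDiffWithinAt ℝ 1 (fun w => Zf s0 r0 (q w).1 (q w).2) S w := (cs.sub cr).div_const 2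
  have cpos := h.Cpos _ hq
  have hcont : ContinuousOn (fun z => -(1 / C z)) R :=
    (continuousOn_const.div h.Ccont (fun z hz => (h.Cpos z hz).ne')).neg
  have cΦ : ContDiffAt ℝ 1 Φ (Zf s0 r0 (q w).1 (q w).2) := cd1_of h.Ropen h.dΦ hcont hq
  have dα := (hasFDerivAt_fst (𝕜 := ℝ) (p := q w)).comp_hasFDerivWithinAt w hd
  have dβ := (hasFDerivAt_snd (𝕜 := ℝ) (p := q w)).comp_hasFDerivWithinAt w hd
  have ds := (h.ds (q w).1).comp_hasFDerivWithinAt w dα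
  have dr := (h.dr (q w).2).comp_hasFDerivWithinAt w dβ
  have dZ : HasFDerivWithinAt (fun w => Zf s0 r0 (q w).1 (q w).2) _ S w := (ds.sub dr).mul_const' (1/2 : ℝ) |>.congr_of_eventuallyEq (Eventually.of_forall fun w => by simp [Zf, div_eq_mul_inv]) (by simp [Zf, div_eq_mul_inv])
  have dθ := (h.dΦ _ hq).comp_hasFDerivWithinAt w dZ
  have dU : HasFDerivWithinAt (fun w => (s0 (q w).1 + r0 (q w).2) / 2) _ S w := (ds.add dr).mul_const' (1/2 : ℝ) |>.congr_of_eventuallyEq (Eventually.of_forall fun w => by simp [div_eq_mul_inv]) (by simp [div_eq_mul_inv])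
  set c := C (Zf s0 r0 (q w).1 (q w).2) with hcdef
  refine ⟨cΦ.comp_contDiffWithinAt w cZ, (cs.add cr).div_const 2,
    -(1 / (2 * c)) * (s1 (q w).1 / (2 * c * Q) - r1 (q w).2 / (2 * c * P)),
    (s1 (q w).1 / Q + r1 (q w).2 / P) / (4 * c), dθ.congr_fderiv ?_, dU.congr_fderiv ?_⟩
  · ext <;> simp [Hodo.Gd] <;> field_simp <;> ring
  · ext <;> simp [Hodo.Gd] <;> field_simp <;> ring

lemma glue {f : ℝ → ℝ} {d : ℝ} (h : HasDerivWithinAt f d (Ici 0) 0) (hf : ∀ t ≤ 0, f t = f 0 + t * d) :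
    HasDerivAt f d 0 := by
  have h2 : HasDerivWithinAt f d (Iic 0) 0 := by
    have : HasDerivAt (fun t : ℝ => f 0 + t * d) d 0 := by
      simpa using ((hasDerivAt_id (0 : ℝ)).mul_const d).const_add (f 0)
    exact this.hasDerivWithinAt.congr (fun t ht => hf t ht) (by simp)
  have := h2.union h
  rwa [Iic_union_Ici, hasDerivWithinAt_univ] at this

lemma sl_x {f : ℝ × ℝ → ℝ} {a b x t : ℝ} (ht : 0 ≤ t)
    (h : HasFDerivWithinAt f (a • ContinuousLinearMap.fst ℝ ℝ ℝ + b • ContinuousLinearMap.snd ℝ ℝ ℝ)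
      (univ ×ˢ Ici 0) (x, t)) : HasDerivAt (fun x' => f (x', t)) a x := by
  have h1 : HasDerivAt (fun x' : ℝ => (x', t)) ((1 : ℝ), (0 : ℝ)) x :=
    (hasDerivAt_id x).prodMk (hasDerivAt_const x t)
  have := HasFDerivWithinAt.comp_hasDerivAt (t := univ ×ˢ Ici 0) x h h1
    (Eventually.of_forall fun y => mk_mem_prod (mem_univ _) ht)
  exact this.congr_deriv (by simp)

lemma sl_t {f : ℝ × ℝ → ℝ} {a b x t : ℝ}
    (h : HasFDerivWithinAt f (a • ContinuousLinearMap.fst ℝ ℝ ℝ + b • ContinuousLinearMap.snd ℝ ℝ ℝ)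
      (univ ×ˢ Ici 0) (x, t)) : HasDerivWithinAt (fun t' => f (x, t')) b (Ici 0) t := by
  have h1 : HasDerivWithinAt (fun t' : ℝ => (x, t')) ((0 : ℝ), (1 : ℝ)) (Ici 0) t :=
    (hasDerivWithinAt_const t _ x).prodMk (hasDerivWithinAt_id t _)
  have := h.comp_hasDerivWithinAt t h1 (fun y hy => ⟨mem_univ _, hy⟩)
  exact this.congr_deriv (by simp)

/-- extend a function given for nonnegative times linearly to negative times -/
noncomputable def ext0 (f : ℝ × ℝ → ℝ) (d : ℝ → ℝ) (x t : ℝ) : ℝ :=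
  if 0 ≤ t then f (x, t) else f (x, 0) + t * d x

lemma ext0_pos {f : ℝ × ℝ → ℝ} {d : ℝ → ℝ} {x t : ℝ} (ht : 0 ≤ t) : ext0 f d x t = f (x, t) := if_pos ht

lemma ext0_deriv {f : ℝ × ℝ → ℝ} {d : ℝ → ℝ} {x t b : ℝ} (ht : 0 ≤ t)
    (h : HasDerivWithinAt (fun t' => f (x, t')) b (Ici 0) t) (hb : t = 0 → d x = b) :
    HasDerivAt (fun t' => ext0 f d x t') b t := by
  have h' : HasDerivWithinAt (fun t' => ext0 f d x t') b (Ici 0) t :=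
    h.congr (fun y hy => ext0_pos hy) (ext0_pos ht)
  rcases ht.eq_or_lt with rfl | hlt
  · refine glue h' fun t ht => ?_
    rcases ht.eq_or_lt with rfl | hlt
    · simp
    · rw [ext0_pos le_rfl, ext0, if_neg (not_le.2 hlt), hb rfl]
  · exact h'.hasDerivAt (Ici_mem_nhds hlt)

theorem sufficiency {p c c1 φ : ℝ → ℝ} (h : PData p c c1 φ) {M₁ M₂ : ℝ} {τ₀ u₀ : ℝ → ℝ}
    (hA : AssumptionA M₁ M₂ τ₀ u₀)
    (h1 : ∀ x, 0 ≤ deriv (fun x => u₀ x + φ (τ₀ x)) x)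
    (h2 : ∀ x, 0 ≤ deriv (fun x => u₀ x - φ (τ₀ x)) x) :
    ∃ τ u : ℝ → ℝ → ℝ,
        GenPSysSol p (Set.Ici 0) 1 τ u ∧ (∀ x, τ x 0 = τ₀ x) ∧ (∀ x, u x 0 = u₀ x) := by
  have hd := mkHD h hA h1 h2
  obtain ⟨ct, cu, hM1, hM2, hb, hl⟩ := hA
  have tpos : ∀ x, 0 < τ₀ x := fun x => hM2.trans_le (hl x)
  have tle : ∀ x, τ₀ x ≤ M₁ := fun x => by
    have := hb x
    linarith [abs_nonneg (deriv u₀ x), abs_nonneg (u₀ x), abs_nonneg (deriv τ₀ x), le_abs_self (τ₀ x)]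
  set s0 : ℝ → ℝ := fun x => u₀ x + φ (τ₀ x) with hs0
  set r0 : ℝ → ℝ := fun x => u₀ x - φ (τ₀ x) with hr0
  have hZ : ∀ x, Zf s0 r0 x x = φ (τ₀ x) := fun x => by simp only [Zf, hs0, hr0]; ring
  obtain ⟨δ, X, T, P, Q, H⟩ := hd.exHodo
  have hvac : ∀ N, ∃ m ∈ φ '' Ioi 0, N ≤ iPhi φ m := fun N => by
    have : 0 < max N 1 := lt_max_of_lt_right one_pos
    exact ⟨φ (max N 1), ⟨_, this, rfl⟩, by rw [h.iPhi_phi this]; exact le_max_left _ _⟩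
  have hM : ∀ x, iPhi φ (Zf s0 r0 x x) ≤ M₁ := fun x => by
    rw [hZ, h.iPhi_phi (tpos x)]; exact tle x
  obtain ⟨q, q0, hq⟩ := H.exq hd (fun x t ht => H.surj hd hvac hM x t ht)
  set θ : ℝ × ℝ → ℝ := fun w => iPhi φ (Zf s0 r0 (q w).1 (q w).2) with hθ
  set U : ℝ × ℝ → ℝ := fun w => (s0 (q w).1 + r0 (q w).2) / 2 with hU
  have θ0 : ∀ x, θ (x, 0) = τ₀ x := fun x => by
    simp only [hθ, q0, hZ, h.iPhi_phi (tpos x)]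
  have U0 : ∀ x, U (x, 0) = u₀ x := fun x => by
    simp only [hU, q0, hs0, hr0]; ring
  have θpos : ∀ x t, 0 ≤ t → 0 < θ (x, t) := fun x t ht => iPhi_pos (hq x t ht).1
  have core : ∀ x t, 0 ≤ t → ContDiffWithinAt ℝ 1 θ (univ ×ˢ Ici 0) (x, t) ∧
    ContDiffWithinAt ℝ 1 U (univ ×ˢ Ici 0) (x, t) ∧
    ∃ a b : ℝ, HasFDerivWithinAt θ
      (a • ContinuousLinearMap.fst ℝ ℝ ℝ + b • ContinuousLinearMap.snd ℝ ℝ ℝ) (univ ×ˢ Ici 0) (x, t) ∧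
      HasFDerivWithinAt U
      (b • ContinuousLinearMap.fst ℝ ℝ ℝ + ((c (θ (x, t))) ^ 2 * a) •
        ContinuousLinearMap.snd ℝ ℝ ℝ) (univ ×ˢ Ici 0) (x, t) := by
    intro x t ht
    obtain ⟨k1, k2, P, Q, k3, k4, k5⟩ := hq x t ht
    exact solcore hd k1 k2 k3 k4 k5
  set d1 : ℝ → ℝ := fun x => deriv u₀ x with hd1
  set d2 : ℝ → ℝ := fun x => -deriv (fun x => p (τ₀ x)) x with hd2
  have key : ∀ x t, 0 ≤ t → ∃ a b : ℝ, HasDerivAt (fun x' => θ (x', t)) a x ∧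
      HasDerivAt (fun x' => U (x', t)) b x ∧ HasDerivAt (fun x' => p (θ (x', t))) (-(c (θ (x, t)))^2 * a) x ∧
      HasDerivAt (fun t' => ext0 θ d1 x t') b t ∧
      HasDerivAt (fun t' => ext0 U d2 x t') ((c (θ (x, t)))^2 * a) t := by
    intro x t ht
    obtain ⟨-, -, a, b, k1, k2⟩ := core x t ht
    have e1 := sl_x ht k1
    have e2 := sl_x ht k2
    have e3 : HasDerivAt (fun x' => p (θ (x', t))) (-(c (θ (x, t)))^2 * a) x :=
      (h.dp _ (θpos x t ht)).comp x e1
    refine ⟨a, b, e1, e2, e3, ext0_deriv ht (sl_t k1) ?_, ext0_deriv ht (sl_t k2) ?_⟩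
    · rintro rfl
      simp only [U0] at e2
      exact e2.deriv
    · rintro rfl
      simp only [hd2]
      simp only [θ0] at e3 ⊢
      rw [e3.deriv]; ring
  have ex : ∀ (f : ℝ × ℝ → ℝ) (d : ℝ → ℝ) (t : ℝ), 0 ≤ t → (fun x' => ext0 f d x' t) = fun x' => f (x', t) :=
    fun f d t ht => funext fun x => ext0_pos ht
  refine ⟨ext0 θ d1, ext0 U d2, ⟨?_, ?_, ?_, ?_, ?_⟩, ?_, ?_⟩
  · intro x t ht
    rw [ext0_pos ht]; exact θpos x t ht
  · have : ContDiffOn ℝ 1 θ (univ ×ˢ Ici 0) := fun w hw => (core w.1 w.2 hw.2).1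
    exact_mod_cast this.congr (fun w hw => ext0_pos hw.2)
  · have : ContDiffOn ℝ 1 U (univ ×ˢ Ici 0) := fun w hw => (core w.1 w.2 hw.2).2.1
    exact_mod_cast this.congr (fun w hw => ext0_pos hw.2)
  · intro x t ht
    obtain ⟨a, b, k1, k2, k3, k4, k5⟩ := key x t ht
    rw [k4.deriv, ex _ _ t ht, k2.deriv, sub_self]
  · intro x t ht
    obtain ⟨a, b, k1, k2, k3, k4, k5⟩ := key x t ht
    have : (fun x' => p (ext0 θ d1 x' t)) = fun x' => p (θ (x', t)) :=
      funext fun x => by rw [ext0_pos ht]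
    rw [k5.deriv, this, k3.deriv]; ring
  · intro x; rw [ext0_pos le_rfl, θ0]
  · intro x; rw [ext0_pos le_rfl, U0]

end sol

/-- Theorem 2.11: for a general pressure `p ∈ C³((0,∞))` with `p' < 0`, `p'' > 0`,
`p(0⁺) = ∞`, `p(∞) = 0`, `∫_1^∞ √(−p') < ∞`, `∫_0^1 √(−p') = ∞`, and
`(5+A) p''² − 4 p' p''' ≥ 0` for some `A > 0`, and for initial data satisfying
Assumption A, the Cauchy problem for the p-system admits a global-in-time `C¹` solution
if and only if `s_x(x,0) ≥ 0` and `r_x(x,0) ≥ 0` for all `x`. -/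
theorem psystem_general_pressure_global_iff_rarefaction
    (p : ℝ → ℝ) (M₁ M₂ : ℝ)
    (hp : ContDiffOn ℝ 3 p (Set.Ioi 0))
    (hp' : ∀ v ∈ Set.Ioi (0 : ℝ), deriv p v < 0)
    (hp'' : ∀ v ∈ Set.Ioi (0 : ℝ), 0 < deriv (deriv p) v)
    (hp0 : Filter.Tendsto p (nhdsWithin 0 (Set.Ioi 0)) Filter.atTop)
    (hpinf : Filter.Tendsto p Filter.atTop (nhds 0))
    (hint1 : MeasureTheory.IntegrableOn (fun v => Real.sqrt (-deriv p v)) (Set.Ioi 1))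
    (hint0 : ¬ MeasureTheory.IntegrableOn (fun v => Real.sqrt (-deriv p v)) (Set.Ioo 0 1))
    (hcond : ∃ A > (0 : ℝ), ∀ v ∈ Set.Ioi (0 : ℝ),
      0 ≤ (5 + A) * deriv (deriv p) v ^ 2 - 4 * deriv p v * deriv (deriv (deriv p)) v)
    (τ₀ u₀ : ℝ → ℝ) (hA : AssumptionA M₁ M₂ τ₀ u₀) :
    (∃ τ u : ℝ → ℝ → ℝ,
        GenPSysSol p (Set.Ici 0) 1 τ u ∧ (∀ x, τ x 0 = τ₀ x) ∧ (∀ x, u x 0 = u₀ x)) ↔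
    (∀ x, 0 ≤ deriv (fun x' => u₀ x' + ∫ ξ in (τ₀ x')..1, Real.sqrt (-deriv p ξ)) x
        ∧ 0 ≤ deriv (fun x' => u₀ x' - ∫ ξ in (τ₀ x')..1, Real.sqrt (-deriv p ξ)) x) := by
  have h := mkPData p hp hp' hp'' hint0 hcond
  constructor
  · rintro ⟨τ, u, hg, i1, i2⟩ x
    exact necessity h hA hg i1 i2 x
  · intro hx
    exact sufficiency h hA (fun x => (hx x).1) (fun x => (hx x).2)
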